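/- arXiv:1311.3822 — 3 statements merged into one kernel-verified Lean document; each statement's English description precedes it below -/
import Mathlib

section
/- Let A ⊆ B(H) be a σ-weakly closed unital operator algebra. Then the infinite amplification A^(∞) = {a ⊗ 1 : a ∈ A} acting on H ⊗ ℓ² is reflexive: every operator T on H ⊗ ℓ² leaving invariant every closed A^(∞)-invariant subspace belongs to A^(∞). -/
open scoped InnerProductSpace

/-! Over a unital algebra `B`, the closure of `B x` is an invariant subspace containing `x`, so an
operator `T ∈ Alg Lat B` satisfies `T x ∈ closure (B x)` for every single `x`. In `ℓ²(ι, E)` with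
`ι` infinite, finitely many vectors can be laid out side by side as one vector, so for `B = A^(∞)`
this approximation at a single vector is already approximation in the σ-weak topology. It remains
to see that `T` is an amplification at all: the closed subspaces `{ξ | ξ i = 0}` and
`{ξ | ξ i = ξ j}` are invariant under all amplifications, hence under `T`, which forces `T` to act
diagonally, by the same operator in each coordinate. -/

open scoped lp ENNReal Topology
open Set Function

section AlgLat

variable {R M : Type*} [CommRing R] [AddCommGroup M] [TopologicalSpace M] [Module R M]

/-- `Alg Lat S`: the operators that leave invariant every closed subspace invariant under all
operators in `S`. An operator algebra `B` is reflexive when `algLat B ⊆ B`. -/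
def algLat (S : Set (M →L[R] M)) : Set (M →L[R] M) :=
  {T | ∀ V : Submodule R M, IsClosed (V : Set M) → (∀ b ∈ S, MapsTo b V V) → MapsTo T V V}

theorem map_apply_eq_zero_of_mem_algLat {N : Type*} [AddCommGroup N] [TopologicalSpace N]
    [T1Space N] [Module R N] {S : Set (M →L[R] M)} {T : M →L[R] M} (hT : T ∈ algLat S)
    (L : M →L[R] N) (hL : ∀ b ∈ S, ∀ x, L x = 0 → L (b x) = 0) {x : M} (hx : L x = 0) :
    L (T x) = 0 :=
  hT L.ker L.isClosed_ker hL hx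

theorem apply_mem_closure_of_mem_algLat [IsTopologicalAddGroup M] [ContinuousConstSMul R M]
    {B : Subalgebra R (M →L[R] M)} {T : M →L[R] M}
    (hT : T ∈ algLat (B : Set (M →L[R] M))) (x : M) :
    T x ∈ closure ((fun b : M →L[R] M => b x) '' B) := by
  let orbit : Submodule R M :=
    (Subalgebra.toSubmodule B).map (LinearMap.applyₗ x ∘ₗ ContinuousLinearMap.coeLM R)
  have orbit_invariant : ∀ b ∈ B, MapsTo b orbit orbit := by
    rintro b hb _ ⟨c, hc, rfl⟩
    exact ⟨b * c, B.mul_mem hb hc, rfl⟩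
  exact hT orbit.topologicalClosure orbit.isClosed_topologicalClosure
    (fun b hb => (orbit_invariant b hb).closure b.continuous)
    (subset_closure ⟨1, B.one_mem, rfl⟩)

end AlgLat

theorem nonempty_prod_embedding_of_finite (κ ι : Type*) [Finite κ] [Infinite ι] :
    Nonempty (κ × ι ↪ ι) := by
  rw [← Cardinal.lift_mk_le', Cardinal.mk_prod]
  simp only [Cardinal.lift_mul, Cardinal.lift_lift]
  refine Cardinal.mul_le_of_le (by simp) ?_ (by simp)
  exact (Cardinal.lift_lt_aleph0.2 (Cardinal.mk_lt_aleph0 (α := κ))).le.trans (by simp)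

section Lp

variable {ι κ E : Type*} {p : ℝ≥0∞} [NormedAddCommGroup E]

theorem exists_lp_apply_eq_and_apply_eq (p : ℝ≥0∞) (i j : ι) (x : E) :
    ∃ ξ : ℓ^p(ι, E), ξ i = x ∧ ξ j = x := by
  classical
  have sum_single_apply {k : ι} (hk : k ∈ ({i, j} : Finset ι)) :
      (∑ l ∈ {i, j}, lp.single p l x : ℓ^p(ι, E)) k = x := by
    rw [lp.coeFn_sum, Finset.sum_apply]
    simp only [lp.single_apply, Pi.single_apply, Finset.sum_ite_eq, hk, if_true]
  exact ⟨_, sum_single_apply (by simp), sum_single_apply (by simp)⟩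

theorem lp_norm_le_of_comp_eq (hp : 0 < p.toReal) {f : κ → ι} (hf : Injective f)
    {ξ : ℓ^p(κ, E)} {ζ : ℓ^p(ι, E)} (h : ζ ∘ f = ξ) : ‖ξ‖ ≤ ‖ζ‖ := by
  refine lp.norm_le_of_tsum_le hp (lp.norm_nonneg' ζ) ?_
  rw [lp.norm_rpow_eq_tsum hp]
  exact ((lp.memℓp ξ).summable hp).tsum_le_tsum_of_inj f hf (fun _ _ => by positivity)
    (fun k => by rw [← h, comp_apply]) ((lp.memℓp ζ).summable hp)

theorem memℓp_extend (hp : 0 < p.toReal) {f : κ → ι} (hf : Injective f) {u : κ → E}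
    (hu : Memℓp u p) : Memℓp (extend f u 0) p := by
  refine memℓp_gen ((hf.summable_iff fun i hi => ?_).1 ?_)
  · rw [extend_apply' _ _ _ hi, Pi.zero_apply, norm_zero, Real.zero_rpow hp.ne']
  · simpa only [comp_def, hf.extend_apply] using hu.summable hp

theorem exists_lp_forall_comp_eq [Finite κ] [Infinite ι] (hp : 0 < p.toReal)
    (ξ : κ → ℓ^p(ι, E)) :
    ∃ (ζ : ℓ^p(ι, E)) (f : κ → ι ↪ ι), ∀ k, ζ ∘ f k = ξ k := by
  obtain ⟨e⟩ : Nonempty (κ × ι ↪ ι) := nonempty_prod_embedding_of_finite κ ι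
  have memℓp_uncurry : Memℓp (fun q : κ × ι => ξ q.1 q.2) p := by
    refine memℓp_gen ?_
    rw [summable_prod_of_nonneg (fun _ => by positivity)]
    exact ⟨fun k => (lp.memℓp (ξ k)).summable hp, .of_finite⟩
  refine ⟨⟨_, memℓp_extend hp e.injective memℓp_uncurry⟩,
    fun k => ⟨fun i => e (k, i), e.injective.comp (Prod.mk_right_injective k)⟩, fun k => ?_⟩
  funext i
  exact e.injective.extend_apply (fun q : κ × ι => ξ q.1 q.2) 0 (k, i)

end Lp

section Amplification

variable {𝕜 ι E : Type*} {p : ℝ≥0∞} [NontriviallyNormedField 𝕜] [NormedAddCommGroup E]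
  [NormedSpace 𝕜 E] [Fact (1 ≤ p)]

variable (𝕜 ι E p) in
/-- The amplification `a ↦ a ⊗ 1`, letting operators on `E` act coordinatewise on `ℓ^p(ι, E)`. The
algebra `A^(∞)` is the image of `A` for `p = 2` and `ι = ℕ`. -/
noncomputable def amplification : (E →L[𝕜] E) →ₐ[𝕜] (ℓ^p(ι, E) →L[𝕜] ℓ^p(ι, E)) :=
  AlgHom.ofLinearMap
    { toFun a := lp.mapCLM p (fun _ => a) (norm_nonneg a) (fun _ => le_rfl)
      map_add' _ _ := rfl
      map_smul' _ _ := rfl }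
    rfl (fun _ _ => rfl)

theorem amplification_apply (a : E →L[𝕜] E) (ξ : ℓ^p(ι, E)) (i : ι) :
    amplification 𝕜 ι E p a ξ i = a (ξ i) :=
  rfl

theorem mem_range_amplification [Nonempty ι] {T : ℓ^p(ι, E) →L[𝕜] ℓ^p(ι, E)}
    (hzero : ∀ i ξ, ξ i = 0 → T ξ i = 0) (hdiag : ∀ i j ξ, ξ i = ξ j → T ξ i = T ξ j) :
    T ∈ (amplification 𝕜 ι E p).range := by
  classical
  have apply_congr {i : ι} {ξ ζ : ℓ^p(ι, E)} (h : ξ i = ζ i) : T ξ i = T ζ i := by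
    rw [← sub_eq_zero] at h ⊢
    have hsub : T (ξ - ζ) i = 0 := hzero i (ξ - ζ) h
    rwa [map_sub] at hsub
  have apply_eq_apply {i j : ι} {ξ ζ : ℓ^p(ι, E)} (h : ξ i = ζ j) : T ξ i = T ζ j := by
    obtain ⟨η, hηi, hηj⟩ := exists_lp_apply_eq_and_apply_eq p i j (ξ i)
    calc T ξ i = T η i := apply_congr hηi.symm
      _ = T η j := hdiag i j η (hηi.trans hηj.symm)
      _ = T ζ j := apply_congr (hηj.trans h)
  obtain ⟨j⟩ := ‹Nonempty ι›
  refine ⟨lp.evalCLM 𝕜 (fun _ => E) p j ∘L T ∘L lp.singleContinuousLinearMap 𝕜 (fun _ => E) p j, ?_⟩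
  ext ξ i
  exact apply_eq_apply (lp.single_apply_self (E := fun _ => E) p j (ξ i))

theorem algLat_image_amplification_subset_range [Nonempty ι] (S : Set (E →L[𝕜] E)) :
    algLat (amplification 𝕜 ι E p '' S) ⊆ (amplification 𝕜 ι E p).range := by
  intro T hT
  let coord (i : ι) : ℓ^p(ι, E) →L[𝕜] E := lp.evalCLM 𝕜 (fun _ => E) p i
  refine mem_range_amplification (fun i ξ hξ => ?_) (fun i j ξ hξ => ?_)
  · refine map_apply_eq_zero_of_mem_algLat hT (coord i) ?_ hξ
    rintro _ ⟨a, -, rfl⟩ η (hη : η i = 0)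
    change amplification 𝕜 ι E p a η i = 0
    rw [amplification_apply, hη, map_zero]
  · refine sub_eq_zero.1 (map_apply_eq_zero_of_mem_algLat hT (coord i - coord j) ?_
      (sub_eq_zero.2 hξ))
    rintro _ ⟨a, -, rfl⟩ η hη
    exact sub_eq_zero.2 (congrArg a (sub_eq_zero.1 hη))

theorem mem_algLat_image_amplification {S : Set (E →L[𝕜] E)} {T : ℓ^p(ι, E) →L[𝕜] ℓ^p(ι, E)} :
    T ∈ algLat (amplification 𝕜 ι E p '' S) ↔
      ∀ V : Submodule 𝕜 ℓ^p(ι, E), IsClosed (V : Set ℓ^p(ι, E)) →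
        (∀ a ∈ S, ∀ ξ ∈ V, ∀ η : ℓ^p(ι, E), (∀ i, η i = a (ξ i)) → η ∈ V) →
        ∀ ξ ∈ V, T ξ ∈ V := by
  refine forall₂_congr fun V _ => imp_congr_left ?_
  rw [forall_mem_image]
  refine forall₂_congr fun a _ => ⟨fun h ξ hξ η hη => ?_, fun h ξ hξ => ?_⟩
  · obtain rfl : η = amplification 𝕜 ι E p a ξ := lp.ext (funext hη)
    exact h hξ
  · exact h ξ hξ _ (amplification_apply a ξ)

end Amplification

section Ultraweak

variable {𝕜 ι E : Type*} [RCLike 𝕜] [NormedAddCommGroup E] [InnerProductSpace 𝕜 E]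

variable (ι) in
/-- The closure of `S` in the topology given by the seminorms `T ↦ ‖∑ᵢ ⟪T ξᵢ, ηᵢ⟫‖` with
`ξ, η ∈ ℓ²(ι, E)`. For `ι = ℕ` and `E` complete this is the σ-weak closure. -/
def ultraweakClosure (S : Set (E →L[𝕜] E)) : Set (E →L[𝕜] E) :=
  {T | ∀ ε > (0 : ℝ), ∀ s : Finset (ℓ²(ι, E) × ℓ²(ι, E)),
    ∃ a ∈ S, ∀ q ∈ s, ‖∑' i, ⟪T (q.1 i) - a (q.1 i), q.2 i⟫_𝕜‖ < ε}

theorem norm_tsum_inner_sub_le (a b : E →L[𝕜] E) (ξ η : ℓ²(ι, E)) :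
    ‖∑' i, ⟪a (ξ i) - b (ξ i), η i⟫_𝕜‖ ≤ ‖amplification 𝕜 ι E 2 (a - b) ξ‖ * ‖η‖ :=
  norm_inner_le_norm (𝕜 := 𝕜) (amplification 𝕜 ι E 2 (a - b) ξ) η

theorem mem_ultraweakClosure_of_forall_mem_closure [Infinite ι] {S : Set (E →L[𝕜] E)}
    {a : E →L[𝕜] E}
    (h : ∀ ξ, amplification 𝕜 ι E 2 a ξ ∈ closure ((fun b => amplification 𝕜 ι E 2 b ξ) '' S)) :
    a ∈ ultraweakClosure ι S := by
  intro ε hε s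
  obtain ⟨ζ, f, hf⟩ := exists_lp_forall_comp_eq (by norm_num) (fun q : s => q.1.1)
  obtain ⟨δ, hδ, hδε⟩ : ∃ δ > 0, ∀ q ∈ s, δ * ‖q.2‖ < ε := by
    have eventually_lt : ∀ᶠ δ in 𝓝[>] (0 : ℝ), ∀ q ∈ s, δ * ‖q.2‖ < ε := by
      refine s.eventually_all.2 fun q _ => nhdsWithin_le_nhds ?_
      exact (continuous_mul_const ‖q.2‖).tendsto' 0 0 (zero_mul _) |>.eventually_lt_const hε
    exact (eventually_lt.and self_mem_nhdsWithin).exists.imp fun δ h => ⟨h.2, h.1⟩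
  obtain ⟨_, ⟨b, hb, rfl⟩, hdist⟩ := Metric.mem_closure_iff.1 (h ζ) δ hδ
  refine ⟨b, hb, fun q hq => ?_⟩
  calc ‖∑' i, ⟪a (q.1 i) - b (q.1 i), q.2 i⟫_𝕜‖
      ≤ ‖amplification 𝕜 ι E 2 (a - b) q.1‖ * ‖q.2‖ := norm_tsum_inner_sub_le a b q.1 q.2
    _ ≤ ‖amplification 𝕜 ι E 2 (a - b) ζ‖ * ‖q.2‖ := by
      gcongr
      exact lp_norm_le_of_comp_eq (by norm_num) (f ⟨q, hq⟩).injective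
        (congrArg ((a - b) ∘ ·) (hf ⟨q, hq⟩))
    _ ≤ δ * ‖q.2‖ := by
      gcongr
      rw [map_sub, sub_apply, ← dist_eq_norm]
      exact hdist.le
    _ < ε := hδε q hq

theorem amplification_reflexive_general [Infinite ι] (A : Subalgebra 𝕜 (E →L[𝕜] E))
    (hA : ultraweakClosure ι (A : Set (E →L[𝕜] E)) ⊆ A) :
    algLat (A.map (amplification 𝕜 ι E 2) : Set (ℓ²(ι, E) →L[𝕜] ℓ²(ι, E))) ⊆
      A.map (amplification 𝕜 ι E 2) := by
  intro T hT
  obtain ⟨a, rfl⟩ := algLat_image_amplification_subset_range (A : Set (E →L[𝕜] E)) hT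
  refine ⟨a, hA (mem_ultraweakClosure_of_forall_mem_closure fun ξ => ?_), rfl⟩
  simpa [image_image] using apply_mem_closure_of_mem_algLat hT ξ

end Ultraweak

/-- a σ-weakly closed unital operator algebra `A ⊆ B(H)` has reflexive
infinite amplification: any operator on `H ⊗ ℓ²` leaving every closed `A^(∞)`-invariant
subspace invariant is itself an amplification `a ⊗ 1` with `a ∈ A`.  σ-weak closedness is
expressed via the seminorms `T ↦ |Σᵢ ⟪T ξᵢ, ηᵢ⟫|` indexed by square-summable sequences. -/
theorem amplification_reflexive
    {H : Type*} [NormedAddCommGroup H] [InnerProductSpace ℂ H] [CompleteSpace H]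
    (A : Subalgebra ℂ (H →L[ℂ] H))
    (hA : ∀ T : H →L[ℂ] H,
      (∀ ε > (0 : ℝ), ∀ s : Finset ((lp (fun _ : ℕ => H) 2) × (lp (fun _ : ℕ => H) 2)),
        ∃ a ∈ A, ∀ q ∈ s, ‖∑' i : ℕ, (⟪T (q.1 i) - a (q.1 i), q.2 i⟫_ℂ)‖ < ε) → T ∈ A) :
    ∀ T : lp (fun _ : ℕ => H) 2 →L[ℂ] lp (fun _ : ℕ => H) 2,
      (∀ V : Submodule ℂ (lp (fun _ : ℕ => H) 2), IsClosed (V : Set (lp (fun _ : ℕ => H) 2)) →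
        (∀ a ∈ A, ∀ ξ ∈ V, ∀ η : lp (fun _ : ℕ => H) 2, (∀ i, η i = a (ξ i)) → η ∈ V) →
        ∀ ξ ∈ V, T ξ ∈ V) →
      ∃ a ∈ A, ∀ (ξ : lp (fun _ : ℕ => H) 2) (i : ℕ), (T ξ) i = a (ξ i) := by
  intro T hT
  obtain ⟨a, ha, rfl⟩ := amplification_reflexive_general A hA (mem_algLat_image_amplification.2 hT)
  exact ⟨a, ha, amplification_apply a⟩
end

section
/- Let A be a C*-algebra with the total reduction property. Then A has the similarity property: every continuous representation θ : A → B(H) is similar to a *-representation, i.e. there exists an invertible S ∈ B(H) such that a ↦ Sθ(a)S⁻¹ is a *-homomorphism. -/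
/-!
Call `T ≥ 1` a symmetrizer of a bounded representation `θ` if `T θ(a) = θ(a*)* T` for all `a`;
conjugating `θ` by the square root of a symmetrizer gives a *-representation.

The little Grothendieck inequality shows that `∑ aᵢ* aᵢ ≤ ∑ bⱼ* bⱼ` implies
`∑ ‖θ(aᵢ) w‖² ≤ K ∑ ‖θ(bⱼ) w‖²`. By the Riesz extension theorem `a* a ↦ ‖θ(a) w‖²` is then
equivalent to a positive functional, and the GNS construction provides a symmetrizer on each cyclic
subspace. Splitting off cyclic subspaces by invariant projections, which exist by total reduction,
yields a symmetrizer on a closed invariant subspace containing any given finite set.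

Applied to a direct sum of triangular representations, total reduction shows that derivations are
inner, with implementing operators bounded uniformly. If `T = exp (2 • L)` is a symmetrizer, the
three lines theorem bounds the commutators `[L, π(a)]` with the *-representation
`π(a) = exp L * θ(a) * exp (-L)` in terms of `‖θ‖` alone, so `L` lies within a distance depending
only on `‖θ‖` from some `c` commuting with `π`. For small `s > 0` a multiple of
`exp L * exp (-2 • s • c) * exp L` is a better symmetrizer than `T`, as soon as `T` exceeds a bound
depending only on `‖θ‖`. Hence the symmetrizers on the subspaces above can be chosen uniformly
bounded, and a weak limit of them symmetrizes `θ`.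
-/

universe u

open scoped ComplexOrder InnerProductSpace NNReal

section RademacherSums

variable {ι : Type*} [Fintype ι]

/-- The Rademacher sum `∑ ± x i` attached to a choice of signs; moments are computed by summing over
all choices. -/
def signedSum {M : Type*} [AddCommGroup M] (x : ι → M) (e : ι → ℤˣ) : M := ∑ i, e i • x i

lemma map_signedSum {M N F : Type*} [AddCommGroup M] [AddCommGroup N] [FunLike F M N]
    [AddMonoidHomClass F M N] (f : F) (x : ι → M) (e : ι → ℤˣ) :
    f (signedSum x e) = signedSum (fun i => f (x i)) e := by
  simp only [signedSum, map_sum, Units.smul_def, map_zsmul]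

lemma isSelfAdjoint_signedSum {M : Type*} [AddCommGroup M] [StarAddMonoid M] {x : ι → M}
    (hx : ∀ i, IsSelfAdjoint (x i)) (e : ι → ℤˣ) : IsSelfAdjoint (signedSum x e) := by
  rw [isSelfAdjoint_iff, ← starAddEquiv_apply, map_signedSum]
  simp only [starAddEquiv_apply, (hx _).star_eq]

variable [DecidableEq ι]

lemma sum_signs_eq_zero (i : ι) (f : (ι → ℤˣ) → ℤ)
    (hf : ∀ e, f (e * Pi.mulSingle i (-1)) = -f e) : ∑ e, f e = 0 := by
  have h := Equiv.sum_comp (Equiv.mulRight (Pi.mulSingle i (-1) : ι → ℤˣ)) f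
  simp only [Equiv.coe_mulRight, hf, Finset.sum_neg_distrib] at h
  lia

lemma sum_signs_mul (i j : ι) :
    ∑ e : ι → ℤˣ, ((e i * e j : ℤˣ) : ℤ) = if i = j then (Fintype.card (ι → ℤˣ) : ℤ) else 0 := by
  split_ifs with h
  · simp [h]
  · exact sum_signs_eq_zero i _ fun e => by simp [Pi.mulSingle_eq_of_ne' h]

lemma sum_signs_mul_mul_mul (i j k l : ι) :
    ∑ e : ι → ℤˣ, ((e i * e j * e k * e l : ℤˣ) : ℤ) = Fintype.card (ι → ℤˣ) *
      ((if i = j ∧ k = l then 1 else 0) + (if i = k ∧ j = l then 1 else 0)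
        + (if i = l ∧ j = k then 1 else 0) - 2 * (if i = j ∧ j = k ∧ k = l then 1 else 0)) := by
  by_cases hij : i = j
  · subst hij
    simp only [Int.units_mul_self, one_mul, sum_signs_mul]
    grind
  by_cases hik : i = k
  · subst hik
    have h (e : ι → ℤˣ) : e i * e j * e i * e l = e j * e l := by
      rw [mul_right_comm (e i), Int.units_mul_self, one_mul]
    simp only [h, sum_signs_mul]
    grind
  by_cases hil : i = l
  · subst hil
    have h (e : ι → ℤˣ) : e i * e j * e k * e i = e j * e k := by
      rw [mul_comm, ← mul_assoc, ← mul_assoc, Int.units_mul_self, one_mul]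
    simp only [h, sum_signs_mul]
    grind
  · rw [sum_signs_eq_zero i _ fun e => by
      simp [Pi.mulSingle_eq_of_ne' hij, Pi.mulSingle_eq_of_ne' hik, Pi.mulSingle_eq_of_ne' hil]]
    simp [hij, hik, hil]

lemma sum_norm_signedSum_sq {E : Type*} [NormedAddCommGroup E] [InnerProductSpace ℂ E]
    (x : ι → E) :
    ∑ e : ι → ℤˣ, ‖signedSum x e‖ ^ 2 = Fintype.card (ι → ℤˣ) * ∑ i, ‖x i‖ ^ 2 := by
  have expand (e : ι → ℤˣ) : ‖signedSum x e‖ ^ 2 =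
      ∑ i, ∑ j, ((e i * e j : ℤˣ) : ℤ) * (⟪x i, x j⟫_ℂ).re := by
    simp only [@norm_sq_eq_re_inner ℂ, signedSum, sum_inner, inner_sum, map_sum, Units.smul_def,
      ← Int.cast_smul_eq_zsmul ℂ, inner_smul_left, inner_smul_right]
    rw [Finset.sum_comm]
    simp [Finset.mul_sum, mul_assoc, mul_left_comm]
  simp_rw [expand]
  rw [Finset.sum_comm, Finset.mul_sum]
  refine Finset.sum_congr rfl fun i _ => ?_
  rw [Finset.sum_comm]
  simp only [← Finset.sum_mul, ← Int.cast_sum, sum_signs_mul]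
  simp [@norm_sq_eq_re_inner ℂ]

lemma sum_signedSum_pow_four {R : Type*} [Ring R] (x : ι → R) :
    ∑ e : ι → ℤˣ, signedSum x e ^ 4 = Fintype.card (ι → ℤˣ) •
      ((∑ i, x i * x i) ^ 2 + ∑ i, ∑ j, x i * x j * x i * x j
        + ∑ i, ∑ j, x i * x j * x j * x i - 2 • ∑ i, x i ^ 4) := by
  have expand (e : ι → ℤˣ) : signedSum x e ^ 4 =
      ∑ i, ∑ j, ∑ k, ∑ l, ((e i * e j * e k * e l : ℤˣ) : ℤ) • (x i * x j * x k * x l) := by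
    simp only [signedSum, pow_succ, pow_zero, one_mul, ← Units.smul_def, ← smul_mul_smul_comm,
      ← Finset.mul_sum, ← Finset.sum_mul]
  have swap : ∑ e : ι → ℤˣ, signedSum x e ^ 4 = ∑ i, ∑ j, ∑ k, ∑ l,
      (∑ e : ι → ℤˣ, ((e i * e j * e k * e l : ℤˣ) : ℤ)) • (x i * x j * x k * x l) := by
    simp only [expand, Finset.sum_smul, Finset.sum_comm (s := (Finset.univ : Finset (ι → ℤˣ)))]
  simp only [swap, sum_signs_mul_mul_mul, mul_smul, ← Finset.smul_sum, natCast_zsmul]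
  congr 1
  simp only [add_smul, sub_smul, Finset.sum_add_distrib, Finset.sum_sub_distrib, ite_and, mul_smul,
    ← Finset.smul_sum, ite_smul, one_smul, zero_smul, Finset.sum_ite_eq, Finset.sum_ite_irrel]
  simp [pow_succ, mul_assoc, Finset.sum_mul_sum]

end RademacherSums

section LittleGrothendieck

variable {A : Type*} [CStarAlgebra A] [PartialOrder A] [StarOrderedRing A]

section FourthMoment

variable {ι : Type*} [Fintype ι] {x : ι → A}

lemma sum_mul_mul_mul_alternating_le (hx : ∀ i, IsSelfAdjoint (x i)) :
    ∑ i, ∑ j, x i * x j * x i * x j ≤ ∑ i, ∑ j, x i * x j * x j * x i := by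
  -- The two sides differ by half the sum of the squared moduli of the commutators.
  have h : 0 ≤ ∑ i, ∑ j, star (x i * x j - x j * x i) * (x i * x j - x j * x i) :=
    Finset.sum_nonneg fun i _ => Finset.sum_nonneg fun j _ => star_mul_self_nonneg _
  have expand : ∑ i, ∑ j, star (x i * x j - x j * x i) * (x i * x j - x j * x i) =
      (2 : ℝ) • (∑ i, ∑ j, x i * x j * x j * x i - ∑ i, ∑ j, x i * x j * x i * x j) := by
    simp only [star_sub, star_mul, (hx _).star_eq, sub_mul, mul_sub, Finset.sum_sub_distrib,
      ← mul_assoc]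
    rw [Finset.sum_comm (f := fun i j => x j * x i * x i * x j),
      Finset.sum_comm (f := fun i j => x j * x i * x j * x i), two_smul]
    abel
  rw [expand] at h
  exact sub_nonneg.1 ((smul_nonneg_iff_nonneg_of_pos_left two_pos).1 h)

lemma mul_self_le_smul_of_le_algebraMap {s : A} (hs : 0 ≤ s) {R : ℝ} (h : s ≤ algebraMap ℝ A R) :
    s * s ≤ R • s := by
  have := Commute.mul_nonneg hs (sub_nonneg.2 h)
    ((Algebra.commute_algebraMap_right R s).sub_right (Commute.refl s))
  rwa [mul_sub, sub_nonneg, ← Algebra.commutes, ← Algebra.smul_def] at this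

lemma sum_mul_sum_mul_mul_le (hx : ∀ i, IsSelfAdjoint (x i)) {R : ℝ}
    (h : ∑ i, x i * x i ≤ algebraMap ℝ A R) :
    ∑ i, ∑ j, x i * x j * x j * x i ≤ R • ∑ i, x i * x i := by
  rw [Finset.smul_sum]
  refine Finset.sum_le_sum fun i _ => ?_
  have := star_left_conjugate_le_conjugate h (x i)
  rw [(hx i).star_eq, ← Algebra.commutes, mul_assoc (algebraMap ℝ A R), ← Algebra.smul_def] at this
  simpa only [Finset.mul_sum, Finset.sum_mul, mul_assoc] using this

lemma sum_signedSum_pow_four_le [DecidableEq ι] (hx : ∀ i, IsSelfAdjoint (x i)) {R : ℝ}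
    (hR : 0 ≤ R) (h : ∑ i, x i * x i ≤ algebraMap ℝ A R) :
    ∑ e : ι → ℤˣ, signedSum x e ^ 4 ≤ algebraMap ℝ A (3 * R ^ 2 * Fintype.card (ι → ℤˣ)) := by
  have sum_nonneg : 0 ≤ ∑ i, x i * x i := Finset.sum_nonneg fun i _ => (hx i).mul_self_nonneg
  have sq_le := mul_self_le_smul_of_le_algebraMap sum_nonneg h
  have nested_le := sum_mul_sum_mul_mul_le hx h
  have alternating_le := (sum_mul_mul_mul_alternating_le hx).trans nested_le
  have fourth_nonneg : 0 ≤ ∑ i, x i ^ 4 := Finset.sum_nonneg fun i _ => by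
    simpa only [← pow_add] using ((hx i).pow 2).mul_self_nonneg
  have smul_le : R • ∑ i, x i * x i ≤ algebraMap ℝ A (R ^ 2) := by
    rw [sq, map_mul, ← Algebra.smul_def]
    exact smul_le_smul_of_nonneg_left h hR
  rw [sum_signedSum_pow_four, mul_comm, map_mul, map_natCast, ← nsmul_eq_mul, map_mul, map_ofNat]
  refine nsmul_le_nsmul_right ?_ _
  rw [sq]
  calc _ ≤ R • ∑ i, x i * x i + R • ∑ i, x i * x i + R • ∑ i, x i * x i - 0 := by
        gcongr
        exact nsmul_nonneg fourth_nonneg 2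
    _ ≤ algebraMap ℝ A (R ^ 2) + algebraMap ℝ A (R ^ 2) + algebraMap ℝ A (R ^ 2) := by
        rw [sub_zero]
        gcongr
    _ = 3 * algebraMap ℝ A (R ^ 2) := by noncomm_ring

end FourthMoment

lemma abs_mul_sub_clip_le {t : ℝ} (ht : 0 ≤ t) (s : ℝ) :
    |4 * t * (s - max (-t) (min t s))| ≤ s ^ 2 := by
  rw [abs_le]
  rcases le_total t s with h | h
  · rw [min_eq_left h, max_eq_right (by linarith)]
    constructor <;> nlinarith [sq_nonneg (s - 2 * t)]
  rw [min_eq_right h]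
  rcases le_total (-t) s with h' | h'
  · simp [max_eq_right h', sq_nonneg]
  · rw [max_eq_left h']
    constructor <;> nlinarith [sq_nonneg (s + 2 * t)]

lemma exists_clip {x : A} (hx : IsSelfAdjoint x) {t : ℝ} (ht : 0 ≤ t) :
    ∃ y z : A, IsSelfAdjoint z ∧ y + z = x ∧ ‖y‖ ≤ t ∧ (16 * t ^ 2) • (z * z) ≤ x ^ 4 := by
  let F : ℝ → ℝ := fun s => max (-t) (min t s)
  have : Continuous F := by fun_prop
  refine ⟨cfc F x, cfc (fun s => s - F s) x, cfc_predicate _ _, ?_, ?_, ?_⟩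
  · rw [← cfc_add (a := x) F _]
    simp [cfc_id' ℝ x]
  · refine norm_cfc_le ht fun s _ => ?_
    rw [Real.norm_eq_abs, abs_le]
    exact ⟨le_max_left _ _, max_le (by linarith) (min_le_left _ _)⟩
  · rw [← cfc_mul _ _ x, ← cfc_smul (16 * t ^ 2) _ x, ← cfc_pow_id (R := ℝ) x 4]
    refine cfc_mono fun s _ => ?_
    have := sq_le_sq.2 ((abs_mul_sub_clip_le ht s).trans (le_abs_self _))
    simp only [F, smul_eq_mul]
    linarith

variable {E : Type*} [NormedAddCommGroup E] [InnerProductSpace ℂ E]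

/-- `v` satisfies the little Grothendieck inequality for finite families of self-adjoint elements,
with constant `K`. -/
def SquareBound (v : A →L[ℂ] E) (K : ℝ) : Prop :=
  ∀ (ι : Type) [Fintype ι] (x : ι → A), (∀ i, IsSelfAdjoint (x i)) → ∀ R : ℝ, 0 < R →
    ∑ i, x i * x i ≤ algebraMap ℝ A R → ∑ i, ‖v (x i)‖ ^ 2 ≤ K * R

lemma norm_map_add_sq_le {F : Type*} [SeminormedAddCommGroup F] [NormedSpace ℂ F] (v : F →L[ℂ] E)
    (x y : F) : ‖v (x + y)‖ ^ 2 ≤ 2 * (‖v‖ * ‖x‖) ^ 2 + 2 * ‖v y‖ ^ 2 := by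
  have h : ‖v (x + y)‖ ≤ ‖v‖ * ‖x‖ + ‖v y‖ := by
    rw [map_add]
    exact (norm_add_le _ _).trans (by gcongr; exact v.le_opNorm x)
  calc ‖v (x + y)‖ ^ 2 ≤ (‖v‖ * ‖x‖ + ‖v y‖) ^ 2 := by gcongr
    _ ≤ 2 * (‖v‖ * ‖x‖) ^ 2 + 2 * ‖v y‖ ^ 2 := by
        linarith [add_sq_le (a := ‖v‖ * ‖x‖) (b := ‖v y‖)]

lemma exists_signedSum_decomposition {ι : Type*} [Fintype ι] [DecidableEq ι] {x : ι → A}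
    (hx : ∀ i, IsSelfAdjoint (x i)) {R : ℝ} (hR : 0 < R)
    (hxR : ∑ i, x i * x i ≤ algebraMap ℝ A R) :
    ∃ y z : (ι → ℤˣ) → A, (∀ e, IsSelfAdjoint (z e)) ∧ (∀ e, y e + z e = signedSum x e) ∧
      (∀ e, ‖y e‖ ^ 2 ≤ 3 * R / 4) ∧
      ∑ e, z e * z e ≤ algebraMap ℝ A (R * Fintype.card (ι → ℤˣ) / 4) := by
  have ht : (√(3 * R) / 2) ^ 2 = 3 * R / 4 := by
    rw [div_pow, Real.sq_sqrt (by positivity)]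
    norm_num
  choose y z hz hyz hy hzle using fun e : ι → ℤˣ =>
    exists_clip (isSelfAdjoint_signedSum hx e) (t := √(3 * R) / 2) (by positivity)
  refine ⟨y, z, hz, hyz, fun e => ht ▸ pow_le_pow_left₀ (norm_nonneg _) (hy e) 2, ?_⟩
  refine (smul_le_smul_iff_of_pos_left (show 0 < 12 * R by positivity)).1 ?_
  calc (12 * R) • ∑ e, z e * z e ≤ ∑ e : ι → ℤˣ, signedSum x e ^ 4 := by
        rw [Finset.smul_sum]
        refine Finset.sum_le_sum fun e _ => ?_
        convert hzle e using 2
        rw [ht]; ring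
    _ ≤ algebraMap ℝ A (3 * R ^ 2 * Fintype.card (ι → ℤˣ)) :=
        sum_signedSum_pow_four_le hx hR.le hxR
    _ = (12 * R) • algebraMap ℝ A (R * Fintype.card (ι → ℤˣ) / 4) := by
        rw [Algebra.smul_def, ← map_mul]; congr 1; ring

-- Clipping the signed sums at a height proportional to `√R` halves `K`, at the cost of `‖v‖ ^ 2`.
lemma SquareBound.improve {v : A →L[ℂ] E} {K : ℝ} (hv : SquareBound v K) :
    SquareBound v (3 / 2 * ‖v‖ ^ 2 + K / 2) := by
  classical
  intro ι _ x hx R hR hxR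
  obtain ⟨y, z, hz, hyz, hy, sum_z⟩ := exists_signedSum_decomposition hx hR hxR
  set N : ℝ := (Fintype.card (ι → ℤˣ) : ℝ) with hN
  have hN0 : 0 < N := by simp only [hN, Nat.cast_pos, Fintype.card_pos]
  have bound (e : ι → ℤˣ) :
      ‖v (signedSum x e)‖ ^ 2 ≤ 3 / 2 * R * ‖v‖ ^ 2 + 2 * ‖v (z e)‖ ^ 2 := by
    have := norm_map_add_sq_le v (y e) (z e)
    rw [hyz e, mul_pow] at this
    linarith [mul_le_mul_of_nonneg_left (hy e) (sq_nonneg ‖v‖)]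
  have second_moment : ∑ e : ι → ℤˣ, ‖v (signedSum x e)‖ ^ 2 = N * ∑ i, ‖v (x i)‖ ^ 2 := by
    simp only [map_signedSum, sum_norm_signedSum_sq, hN]
  refine le_of_mul_le_mul_left ?_ hN0
  calc N * ∑ i, ‖v (x i)‖ ^ 2
      ≤ ∑ e : ι → ℤˣ, (3 / 2 * R * ‖v‖ ^ 2 + 2 * ‖v (z e)‖ ^ 2) :=
        second_moment ▸ Finset.sum_le_sum fun e _ => bound e
    _ = N * (3 / 2 * R * ‖v‖ ^ 2) + 2 * ∑ e, ‖v (z e)‖ ^ 2 := by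
        simp only [Finset.sum_add_distrib, Finset.mul_sum, hN, Finset.sum_const, nsmul_eq_mul,
          Finset.card_univ]
    _ ≤ N * (3 / 2 * R * ‖v‖ ^ 2) + 2 * (K * (R * N / 4)) := by
        gcongr
        exact hv _ z hz _ (by positivity) sum_z
    _ = N * ((3 / 2 * ‖v‖ ^ 2 + K / 2) * R) := by ring

lemma norm_sum_smul_sq_le {ι : Type*} [Fintype ι] {x : ι → A} (hx : ∀ i, IsSelfAdjoint (x i))
    {R : ℝ} (hR : 0 ≤ R) (hxR : ∑ i, x i * x i ≤ algebraMap ℝ A R) (c : ι → ℂ) :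
    ‖∑ i, c i • x i‖ ^ 2 ≤ R * ∑ i, ‖c i‖ ^ 2 := by
  rcases subsingleton_or_nontrivial A with _ | _
  · rw [Subsingleton.elim (∑ i, c i • x i) 0, norm_zero, zero_pow two_ne_zero]
    positivity
  let X : WithCStarModule A (ι → A) := (WithCStarModule.equiv A (ι → A)).symm x
  let Y : WithCStarModule A (ι → A) :=
    (WithCStarModule.equiv A (ι → A)).symm fun i => algebraMap ℂ A (c i)
  have inner_eq : inner A X Y = ∑ i, c i • x i := by
    simp [X, Y, WithCStarModule.pi_inner, WithCStarModule.inner_def, (hx _).star_eq,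
      ← Algebra.smul_def]
  have norm_X : ‖X‖ ^ 2 ≤ R := by
    rw [WithCStarModule.pi_norm_sq, CStarAlgebra.norm_le_iff_le_algebraMap _ hR
      (Finset.sum_nonneg fun i _ => CStarModule.inner_self_nonneg)]
    simpa [X, WithCStarModule.inner_def, (hx _).star_eq] using hxR
  have norm_Y : ‖Y‖ ^ 2 ≤ ∑ i, ‖c i‖ ^ 2 := by
    rw [WithCStarModule.pi_norm_sq]
    refine (norm_sum_le _ _).trans (Finset.sum_le_sum fun i _ => ?_)
    rw [← CStarModule.norm_sq_eq]
    simp only [Y, WithCStarModule.equiv_symm_pi_apply, norm_algebraMap', le_refl]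
  calc ‖∑ i, c i • x i‖ ^ 2 ≤ (‖X‖ * ‖Y‖) ^ 2 := by
        rw [← inner_eq]
        gcongr
        exact CStarModule.norm_inner_le _
    _ ≤ R * ∑ i, ‖c i‖ ^ 2 := by
        rw [mul_pow]
        gcongr

lemma squareBound_functional (f : A →L[ℂ] ℂ) : SquareBound f (‖f‖ ^ 2) := by
  intro ι _ x hx R hR hxR
  set s : ℝ := ∑ i, ‖f (x i)‖ ^ 2 with hs
  have hs0 : 0 ≤ s := by positivity
  have apply_eq : f (∑ i, star (f (x i)) • x i) = s := by
    simp [hs, map_sum, Complex.conj_mul']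
  have hsq : s ^ 2 ≤ ‖f‖ ^ 2 * (R * s) := by
    calc s ^ 2 = ‖f (∑ i, star (f (x i)) • x i)‖ ^ 2 := by
          rw [apply_eq, Complex.norm_real, Real.norm_of_nonneg hs0]
      _ ≤ (‖f‖ * ‖∑ i, star (f (x i)) • x i‖) ^ 2 := by gcongr; exact f.le_opNorm _
      _ ≤ ‖f‖ ^ 2 * (R * s) := by
          rw [mul_pow]
          gcongr
          simpa [hs] using norm_sum_smul_sq_le hx hR.le hxR fun i => star (f (x i))
  rcases hs0.eq_or_lt with h | h
  · rw [← h]; positivity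
  · exact le_of_mul_le_mul_right (by linarith) h

variable (v : A →L[ℂ] E)

lemma exists_squareBound [FiniteDimensional ℂ E] : ∃ K, SquareBound v K := by
  let b := stdOrthonormalBasis ℂ E
  refine ⟨∑ k, ‖(innerSL ℂ (b k)).comp v‖ ^ 2, fun ι _ x hx R hR hxR => ?_⟩
  calc ∑ i, ‖v (x i)‖ ^ 2 = ∑ k, ∑ i, ‖(innerSL ℂ (b k)).comp v (x i)‖ ^ 2 := by
        rw [Finset.sum_comm]
        exact Finset.sum_congr rfl fun i _ => (b.sum_sq_norm_inner_right (v (x i))).symm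
    _ ≤ (∑ k, ‖(innerSL ℂ (b k)).comp v‖ ^ 2) * R := by
        rw [Finset.sum_mul]
        exact Finset.sum_le_sum fun k _ => squareBound_functional _ ι x hx R hR hxR

lemma squareBound_of_finiteDimensional [FiniteDimensional ℂ E] : SquareBound v (3 * ‖v‖ ^ 2) := by
  obtain ⟨K, hK⟩ := exists_squareBound v
  have iterate (n : ℕ) : SquareBound v (3 * ‖v‖ ^ 2 + (K - 3 * ‖v‖ ^ 2) * (1 / 2) ^ n) := by
    induction n with
    | zero => simpa using hK
    | succ n ih =>
      convert ih.improve using 1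
      ring
  intro ι _ x hx R hR hxR
  have lim : Filter.Tendsto (fun n : ℕ => (3 * ‖v‖ ^ 2 + (K - 3 * ‖v‖ ^ 2) * (1 / 2 : ℝ) ^ n) * R)
      Filter.atTop (nhds ((3 * ‖v‖ ^ 2 + (K - 3 * ‖v‖ ^ 2) * 0) * R)) :=
    (((tendsto_pow_atTop_nhds_zero_of_lt_one (by norm_num) (by norm_num)).const_mul _).const_add
      _).mul_const R
  rw [mul_zero, add_zero] at lim
  exact ge_of_tendsto' lim fun n => iterate n ι x hx R hR hxR

theorem squareBound : SquareBound v (3 * ‖v‖ ^ 2) := by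
  intro ι _ x hx R hR hxR
  let S : Submodule ℂ E := Submodule.span ℂ (Set.range fun i => v (x i))
  have : FiniteDimensional ℂ S := FiniteDimensional.span_of_finite ℂ (Set.finite_range _)
  let w : A →L[ℂ] S := S.orthogonalProjectionOnto.comp v
  have norm_w (i : ι) : ‖w (x i)‖ = ‖v (x i)‖ := by
    have hmem : v (x i) ∈ S := Submodule.subset_span ⟨i, rfl⟩
    exact congrArg norm (Submodule.orthogonalProjectionOnto_mem_subspace_eq_self ⟨v (x i), hmem⟩)
  have norm_w_le : ‖w‖ ≤ ‖v‖ :=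
    (ContinuousLinearMap.opNorm_comp_le _ _).trans
      (mul_le_of_le_one_left (norm_nonneg v) S.orthogonalProjectionOnto_norm_le)
  calc ∑ i, ‖v (x i)‖ ^ 2 = ∑ i, ‖w (x i)‖ ^ 2 := by simp only [norm_w]
    _ ≤ 3 * ‖w‖ ^ 2 * R := squareBound_of_finiteDimensional w ι x hx R hR hxR
    _ ≤ 3 * ‖v‖ ^ 2 * R := by gcongr

end LittleGrothendieck

section ColumnBounds

variable {A : Type*} [CStarAlgebra A] [PartialOrder A] [StarOrderedRing A]

lemma exists_isSelfAdjoint_unit_mul_self_eq {b : A} (hb : IsStrictlyPositive b) :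
    ∃ u : Aˣ, IsSelfAdjoint (u : A) ∧ (u * u : A) = b :=
  ⟨(hb.isUnit_cfcSqrt b).unit, (CFC.sqrt_nonneg b).isSelfAdjoint,
    CFC.sqrt_mul_sqrt_self b hb.nonneg⟩

lemma isSelfAdjoint_inv_unit {M : Type*} [Monoid M] [StarMul M] {u : Mˣ}
    (hu : IsSelfAdjoint (u : M)) : IsSelfAdjoint (↑u⁻¹ : M) := by
  have hu' : star u = u := Units.ext hu
  rw [isSelfAdjoint_iff, ← Units.coe_star, star_inv, hu']

lemma star_mul_self_mul_inv_unit {R : Type*} [Semiring R] [StarRing R] {u : Rˣ}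
    (hu : IsSelfAdjoint (u : R)) (a : R) :
    star (a * ↑u⁻¹) * (a * ↑u⁻¹) = ↑u⁻¹ * (star a * a) * ↑u⁻¹ := by
  rw [star_mul, (isSelfAdjoint_inv_unit hu).star_eq]
  simp only [mul_assoc]

lemma sum_star_mul_self_mul_inv_unit_le_one {ι : Type*} [Fintype ι] {a : ι → A} {u : Aˣ}
    (hu : IsSelfAdjoint (u : A)) (h : ∑ i, star (a i) * a i ≤ u * u) :
    ∑ i, star (a i * ↑u⁻¹) * (a i * ↑u⁻¹) ≤ 1 := by
  simp only [star_mul_self_mul_inv_unit hu, ← Finset.mul_sum, ← Finset.sum_mul]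
  calc ↑u⁻¹ * (∑ i, star (a i) * a i) * ↑u⁻¹ ≤ ↑u⁻¹ * (u * u : A) * ↑u⁻¹ :=
        (isSelfAdjoint_inv_unit hu).conjugate_le_conjugate h
    _ = 1 := by simp

lemma norm_mul_inv_unit_le_one {a : A} {u : Aˣ} (hu : IsSelfAdjoint (u : A))
    (h : star a * a ≤ u * u) : ‖a * ↑u⁻¹‖ ≤ 1 := by
  have := sum_star_mul_self_mul_inv_unit_le_one (ι := Unit) (a := fun _ => a) hu (by simpa using h)
  rw [Fintype.sum_unique, ← CStarAlgebra.norm_le_one_iff_of_nonneg _ (star_mul_self_nonneg _),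
    CStarRing.norm_star_mul_self, ← sq] at this
  exact (sq_le_one_iff₀ (norm_nonneg _)).1 this

section OrbitMap

variable {B H : Type*} [SeminormedRing B] [NormedAlgebra ℂ B]
  [NormedAddCommGroup H] [NormedSpace ℂ H]

/-- The orbit map `a ↦ θ a w` of a bounded representation. -/
noncomputable def orbitMap (θ : B →ₐ[ℂ] (H →L[ℂ] H)) {C : ℝ≥0} (hC : ∀ a, ‖θ a‖ ≤ C * ‖a‖) (w : H) :
    B →L[ℂ] H :=
  (ContinuousLinearMap.apply ℂ H w).comp (θ.toLinearMap.mkContinuous C hC)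

variable {θ : B →ₐ[ℂ] (H →L[ℂ] H)} {C : ℝ≥0} (hC : ∀ a, ‖θ a‖ ≤ C * ‖a‖) (w : H)

lemma norm_orbitMap_le : ‖orbitMap θ hC w‖ ≤ C * ‖w‖ :=
  ContinuousLinearMap.opNorm_le_bound _ (by positivity) fun a =>
    ((θ a).le_of_opNorm_le (hC a) w).trans_eq (by ring)

end OrbitMap

variable {H : Type*} [NormedAddCommGroup H] [InnerProductSpace ℂ H] {θ : A →ₐ[ℂ] (H →L[ℂ] H)}
  {C : ℝ≥0}

lemma norm_map_apply_sq_le_of_star_mul_self_le (hC : ∀ a, ‖θ a‖ ≤ C * ‖a‖) (w : H) {a : A} {u : Aˣ}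
    (hu : IsSelfAdjoint (u : A)) (h : star a * a ≤ u * u) :
    ‖θ a w‖ ^ 2 ≤ C ^ 2 * ‖θ u w‖ ^ 2 := by
  have factor : θ a w = θ (a * ↑u⁻¹) (θ u w) := by
    rw [← mul_apply_eq_comp, ← map_mul, mul_assoc, Units.inv_mul, mul_one]
  rw [factor, ← mul_pow]
  gcongr
  refine (θ (a * ↑u⁻¹)).le_of_opNorm_le ((hC _).trans ?_) _
  exact mul_le_of_le_one_right C.2 (norm_mul_inv_unit_le_one hu h)

lemma sum_norm_map_apply_sq_le (hC : ∀ a, ‖θ a‖ ≤ C * ‖a‖) (w : H) {ι : Type} [Fintype ι]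
    {a : ι → A} (ha : ∑ i, star (a i) * a i ≤ 1) :
    ∑ i, ‖θ (a i) w‖ ^ 2 ≤ 6 * C ^ 4 * ‖w‖ ^ 2 := by
  set ε : ℝ := (Fintype.card ι + 1 : ℝ)⁻¹
  have hε : IsStrictlyPositive (algebraMap ℝ A ε) :=
    isStrictlyPositive_algebraMap (by positivity)
  choose u hu huu using fun i =>
    exists_isSelfAdjoint_unit_mul_self_eq (hε.nonneg_add (star_mul_self_nonneg (a i)))
  have sum_u : ∑ i, (u i * u i : A) ≤ algebraMap ℝ A 2 := by
    have total : ∑ _i : ι, algebraMap ℝ A ε ≤ 1 := by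
      rw [← map_sum, Finset.sum_const, Finset.card_univ, nsmul_eq_mul, ← map_one (algebraMap ℝ A)]
      refine algebraMap_mono A ?_
      rw [mul_inv_le_iff₀ (by positivity)]
      linarith
    simp only [huu, Finset.sum_add_distrib]
    exact (add_le_add ha total).trans_eq (by rw [map_ofNat, one_add_one_eq_two])
  calc ∑ i, ‖θ (a i) w‖ ^ 2 ≤ ∑ i, C ^ 2 * ‖θ (u i) w‖ ^ 2 :=
        Finset.sum_le_sum fun i _ => norm_map_apply_sq_le_of_star_mul_self_le hC w (hu i)
          (by rw [huu]; exact le_add_of_nonneg_right hε.nonneg)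
    _ = C ^ 2 * ∑ i, ‖orbitMap θ hC w (u i)‖ ^ 2 := by
        rw [Finset.mul_sum]; rfl
    _ ≤ C ^ 2 * (3 * (C * ‖w‖) ^ 2 * 2) := by
        gcongr
        refine (squareBound _ ι _ hu 2 two_pos sum_u).trans ?_
        gcongr
        exact norm_orbitMap_le hC w
    _ = 6 * C ^ 4 * ‖w‖ ^ 2 := by ring

/-- The representation `a ↦ θ(a*)*`, through which bounds on columns yield bounds on rows. -/
def dualRepresentation {A B : Type*} [Semiring A] [StarRing A] [Algebra ℂ A] [StarModule ℂ A]
    [Semiring B] [StarRing B] [Algebra ℂ B] [StarModule ℂ B] (θ : A →ₐ[ℂ] B) : A →ₐ[ℂ] B where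
  toFun a := star (θ (star a))
  map_one' := by simp
  map_mul' a b := by simp
  map_zero' := by simp
  map_add' a b := by simp
  commutes' c := by simp [Algebra.algebraMap_eq_smul_one]

variable [CompleteSpace H]

lemma norm_sum_adjoint_apply_sq_le {ι : Type*} [Fintype ι] (T : ι → H →L[ℂ] H) {K : ℝ} (hK : 0 ≤ K)
    (hT : ∀ z, ∑ i, ‖T i z‖ ^ 2 ≤ K * ‖z‖ ^ 2) (y : ι → H) :
    ‖∑ i, star (T i) (y i)‖ ^ 2 ≤ K * ∑ i, ‖y i‖ ^ 2 := by
  set z := ∑ i, star (T i) (y i) with hz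
  have norm_sq : ‖z‖ ^ 2 ≤ ∑ i, ‖y i‖ * ‖T i z‖ := by
    calc ‖z‖ ^ 2 = ∑ i, (⟪y i, T i z⟫_ℂ).re := by
          rw [@norm_sq_eq_re_inner ℂ]
          nth_rw 1 [hz]
          simp [sum_inner, ContinuousLinearMap.star_eq_adjoint,
            ContinuousLinearMap.adjoint_inner_left]
      _ ≤ ∑ i, ‖y i‖ * ‖T i z‖ := Finset.sum_le_sum fun i _ => re_inner_le_norm (𝕜 := ℂ) _ _
  rcases (sq_nonneg ‖z‖).eq_or_lt with h | h
  · rw [← h]; positivity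
  refine le_of_mul_le_mul_right ?_ h
  calc ‖z‖ ^ 2 * ‖z‖ ^ 2 ≤ (∑ i, ‖y i‖ * ‖T i z‖) ^ 2 := by rw [sq (∑ i, _)]; gcongr
    _ ≤ (∑ i, ‖y i‖ ^ 2) * ∑ i, ‖T i z‖ ^ 2 := Finset.sum_mul_sq_le_sq_mul_sq _ _ _
    _ ≤ (∑ i, ‖y i‖ ^ 2) * (K * ‖z‖ ^ 2) := by gcongr; exact hT z
    _ = K * (∑ i, ‖y i‖ ^ 2) * ‖z‖ ^ 2 := by ring

lemma norm_sum_map_star_apply_sq_le (hC : ∀ a, ‖θ a‖ ≤ C * ‖a‖) {ι : Type} [Fintype ι]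
    {a : ι → A} (ha : ∑ i, star (a i) * a i ≤ 1) (y : ι → H) :
    ‖∑ i, θ (star (a i)) (y i)‖ ^ 2 ≤ 6 * C ^ 4 * ∑ i, ‖y i‖ ^ 2 := by
  have hdual (b : A) : ‖dualRepresentation θ b‖ ≤ C * ‖b‖ := by
    simpa [dualRepresentation] using hC (star b)
  have := norm_sum_adjoint_apply_sq_le (fun i => dualRepresentation θ (a i)) (by positivity)
    (fun z => sum_norm_map_apply_sq_le hdual z ha) y
  simpa [dualRepresentation] using this

lemma sum_norm_sq_le_of_isStrictlyPositive (hC : ∀ a, ‖θ a‖ ≤ C * ‖a‖) (w : H) {ι κ : Type}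
    [Fintype ι] [Fintype κ] {a : ι → A} {b : κ → A}
    (hab : ∑ i, star (a i) * a i ≤ ∑ j, star (b j) * b j)
    (hb : IsStrictlyPositive (∑ j, star (b j) * b j)) :
    ∑ i, ‖θ (a i) w‖ ^ 2 ≤ 36 * C ^ 8 * ∑ j, ‖θ (b j) w‖ ^ 2 := by
  obtain ⟨u, hu, huu⟩ := exists_isSelfAdjoint_unit_mul_self_eq hb
  have column := sum_norm_map_apply_sq_le hC (θ u w)
    (sum_star_mul_self_mul_inv_unit_le_one hu (huu ▸ hab))
  have row := norm_sum_map_star_apply_sq_le hC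
    (sum_star_mul_self_mul_inv_unit_le_one hu huu.ge) (fun j => θ (b j) w)
  have column_eq (i : ι) : θ (a i * ↑u⁻¹) (θ u w) = θ (a i) w := by
    rw [← mul_apply_eq_comp, ← map_mul, mul_assoc, Units.inv_mul, mul_one]
  have row_eq : ∑ j, θ (star (b j * ↑u⁻¹)) (θ (b j) w) = θ u w := by
    simp only [← mul_apply_eq_comp, ← map_mul, ← sum_apply, ← map_sum,
      star_mul, (isSelfAdjoint_inv_unit hu).star_eq, mul_assoc, ← Finset.mul_sum, ← huu,
      Units.inv_mul_cancel_left]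
  simp only [column_eq] at column
  rw [row_eq] at row
  calc ∑ i, ‖θ (a i) w‖ ^ 2 ≤ 6 * C ^ 4 * ‖θ u w‖ ^ 2 := column
    _ ≤ 6 * C ^ 4 * (6 * C ^ 4 * ∑ j, ‖θ (b j) w‖ ^ 2) := by gcongr
    _ = 36 * C ^ 8 * ∑ j, ‖θ (b j) w‖ ^ 2 := by ring

theorem sum_norm_sq_le_of_sum_star_mul_self_le (hC : ∀ a, ‖θ a‖ ≤ C * ‖a‖) (w : H) {ι κ : Type}
    [Fintype ι] [Fintype κ] {a : ι → A} {b : κ → A}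
    (hab : ∑ i, star (a i) * a i ≤ ∑ j, star (b j) * b j) :
    ∑ i, ‖θ (a i) w‖ ^ 2 ≤ 36 * C ^ 8 * ∑ j, ‖θ (b j) w‖ ^ 2 := by
  have perturbed (ε : ℝ) (hε : 0 < ε) :
      ∑ i, ‖θ (a i) w‖ ^ 2 ≤ 36 * C ^ 8 * (ε ^ 2 * ‖w‖ ^ 2 + ∑ j, ‖θ (b j) w‖ ^ 2) := by
    have eq_algebraMap : star ((ε : ℂ) • (1 : A)) * ((ε : ℂ) • 1) = algebraMap ℝ A (ε ^ 2) := by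
      simp [← sq, smul_pow, Algebra.algebraMap_eq_smul_one]
    have := sum_norm_sq_le_of_isStrictlyPositive hC w (a := a)
      (b := fun j : Option κ => j.elim ((ε : ℂ) • (1 : A)) b)
    simp only [Fintype.sum_option, Option.elim, map_smul, map_one, eq_algebraMap] at this
    have hε' : IsStrictlyPositive (algebraMap ℝ A (ε ^ 2)) :=
      isStrictlyPositive_algebraMap (by positivity)
    simpa [norm_smul, mul_pow] using this (hab.trans (le_add_of_nonneg_left hε'.nonneg))
      (hε'.add_nonneg (Finset.sum_nonneg fun j _ => star_mul_self_nonneg (b j)))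
  have lim : Filter.Tendsto
      (fun ε : ℝ => 36 * C ^ 8 * (ε ^ 2 * ‖w‖ ^ 2 + ∑ j, ‖θ (b j) w‖ ^ 2))
      (nhdsWithin 0 (Set.Ioi 0))
      (nhds (36 * C ^ 8 * ∑ j, ‖θ (b j) w‖ ^ 2)) := by
    have : Continuous fun ε : ℝ => 36 * C ^ 8 * (ε ^ 2 * ‖w‖ ^ 2 + ∑ j, ‖θ (b j) w‖ ^ 2) := by
      fun_prop
    simpa using (this.tendsto 0).mono_left nhdsWithin_le_nhds
  exact ge_of_tendsto lim (eventually_mem_nhdsWithin.mono perturbed)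

end ColumnBounds

section Domination

section Sandwich

variable {E : Type*} [AddCommGroup E] [PartialOrder E] [IsOrderedAddMonoid E] [Module ℝ E]
  [PosSMulMono ℝ E]

/-- For a cone `M` of pairs `(x, r)`, the cone of those `(x, r)` for which the bounds `s ≤ f y` and
`f y ≤ K * s` for all `(y, s) ∈ M` force a monotone linear `f` to satisfy `f x ≤ r`. -/
def dominationCone (M : PointedCone ℝ (E × ℝ)) (K : ℝ) : PointedCone ℝ (E × ℝ) where
  carrier := {q | ∃ p ∈ M, ∃ p' ∈ M, q.1 + p.1 ≤ p'.1 ∧ K * p'.2 - p.2 ≤ q.2}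
  zero_mem' := ⟨0, M.zero_mem, 0, M.zero_mem, by simp, by simp⟩
  add_mem' := by
    rintro x y ⟨p, hp, p', hp', h, h'⟩ ⟨q, hq, q', hq', k, k'⟩
    refine ⟨p + q, M.add_mem hp hq, p' + q', M.add_mem hp' hq', ?_, ?_⟩
    · simpa only [Prod.fst_add, add_add_add_comm] using add_le_add h k
    · simp only [Prod.snd_add]
      linarith
  smul_mem' := by
    rintro ⟨c, hc⟩ x ⟨p, hp, p', hp', h, h'⟩
    refine ⟨c • p, M.smul_mem hc hp, c • p', M.smul_mem hc hp', ?_, ?_⟩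
    · change c • x.1 + c • p.1 ≤ c • p'.1
      exact smul_add c x.1 p.1 ▸ smul_le_smul_of_nonneg_left h hc
    · calc K * (c * p'.2) - c * p.2 = c * (K * p'.2 - p.2) := by ring
        _ ≤ c * x.2 := mul_le_mul_of_nonneg_left h' hc

lemma exists_linearMap_snd_le_and_le_mul_snd (M : PointedCone ℝ (E × ℝ)) (K : ℝ)
    (cofinal : ∀ x, ∃ p ∈ M, x ≤ p.1) (le_mul : ∀ p ∈ M, ∀ p' ∈ M, p.1 ≤ p'.1 → p.2 ≤ K * p'.2) :
    ∃ g : E →ₗ[ℝ] ℝ, ∀ p ∈ M, p.2 ≤ g p.1 ∧ g p.1 ≤ K * p.2 := by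
  obtain ⟨g, g_snd, g_nonneg⟩ := riesz_extension (dominationCone M K)
    ((LinearMap.snd ℝ E ℝ).toPMap (LinearMap.range (LinearMap.inr ℝ E ℝ)))
    (by
      rintro ⟨_, r, rfl⟩ ⟨p, hp, p', hp', h, h'⟩
      have := le_mul p hp p' hp' (by simpa using h)
      exact (sub_nonneg.2 this).trans h')
    (by
      rintro ⟨x, r⟩
      obtain ⟨p, hp, hxp⟩ := cofinal x
      exact ⟨⟨_, K * p.2 - r, rfl⟩, 0, M.zero_mem, p, hp, by simpa using hxp, by simp⟩)
  have g_apply (x : E) (r : ℝ) : g (x, r) = g (x, 0) + r := by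
    have : g (0, r) = r := g_snd ⟨_, r, rfl⟩
    nth_rw 2 [← this]
    rw [← map_add, Prod.mk_add_mk, add_zero, zero_add]
  refine ⟨-(g ∘ₗ LinearMap.inl ℝ E ℝ), fun p hp => ⟨?_, ?_⟩⟩
  · have : 0 ≤ g (-p) := g_nonneg (-p) ⟨p, hp, 0, M.zero_mem, by simp, by simp⟩
    rw [map_neg, ← Prod.mk.eta (p := p), g_apply] at this
    change p.2 ≤ -g (p.1, 0)
    linarith
  · have := g_nonneg (p.1, K * p.2) ⟨0, M.zero_mem, p, hp, by simp, by simp⟩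
    rw [g_apply] at this
    change -g (p.1, 0) ≤ K * p.2
    linarith

end Sandwich

variable {A : Type*} [CStarAlgebra A] [PartialOrder A] [StarOrderedRing A]
  {H : Type*} [NormedAddCommGroup H] [InnerProductSpace ℂ H]

/-- The cone of pairs `(∑ aᵢ* aᵢ, ∑ ‖θ(aᵢ) w‖²)` over finite families `a`. -/
def momentCone (θ : A →ₐ[ℂ] (H →L[ℂ] H)) (w : H) : PointedCone ℝ (selfAdjoint A × ℝ) where
  carrier := {p | ∃ (ι : Type) (_ : Fintype ι) (a : ι → A),
    ∑ i, star (a i) * a i = p.1 ∧ ∑ i, ‖θ (a i) w‖ ^ 2 = p.2}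
  zero_mem' := ⟨Empty, inferInstance, Empty.elim, by simp, by simp⟩
  add_mem' := by
    rintro p q ⟨ι, _, a, ha, ha'⟩ ⟨κ, _, b, hb, hb'⟩
    exact ⟨ι ⊕ κ, inferInstance, Sum.elim a b, by simp [ha, hb], by simp [ha', hb']⟩
  smul_mem' := by
    rintro ⟨c, hc⟩ p ⟨ι, _, a, ha, ha'⟩
    refine ⟨ι, inferInstance, fun i => ((√c : ℝ) : ℂ) • a i, ?_, ?_⟩
    · simp [smul_smul, Real.mul_self_sqrt hc, ← Finset.smul_sum, ha, Nonneg.mk_smul]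
    · simp [-Complex.coe_smul, norm_smul, mul_pow, Real.sq_sqrt hc, ← Finset.mul_sum, ha',
        Nonneg.mk_smul]

variable {θ : A →ₐ[ℂ] (H →L[ℂ] H)} {C : ℝ≥0} [CompleteSpace H]

lemma exists_linearMap_norm_sq_le (hC : ∀ a, ‖θ a‖ ≤ C * ‖a‖) (w : H) :
    ∃ g : selfAdjoint A →ₗ[ℝ] ℝ, ∀ a, ‖θ a w‖ ^ 2 ≤ g ⟨star a * a, .star_mul_self a⟩ ∧
      g ⟨star a * a, .star_mul_self a⟩ ≤ 36 * C ^ 8 * ‖θ a w‖ ^ 2 := by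
  have : PosSMulMono ℝ (selfAdjoint A) :=
    ⟨fun c hc x y hxy => smul_le_smul_of_nonneg_left (β := A) hxy hc⟩
  obtain ⟨g, hg⟩ := exists_linearMap_snd_le_and_le_mul_snd (momentCone θ w) (36 * C ^ 8)
    (by
      intro x
      obtain ⟨y, hy⟩ := CStarAlgebra.nonneg_iff_eq_star_mul_self.1
        (algebraMap_nonneg A (norm_nonneg (x : A)))
      refine ⟨(⟨star y * y, .star_mul_self y⟩, ‖θ y w‖ ^ 2),
        ⟨Unit, inferInstance, fun _ => y, by simp, by simp⟩, ?_⟩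
      exact (x.2.le_algebraMap_norm_self).trans_eq hy)
    (by
      rintro p ⟨ι, _, a, ha, ha'⟩ p' ⟨κ, _, b, hb, hb'⟩ h
      rw [← ha', ← hb']
      exact sum_norm_sq_le_of_sum_star_mul_self_le hC w (by rw [ha, hb]; exact h))
  exact ⟨g, fun a => hg (⟨star a * a, .star_mul_self a⟩, ‖θ a w‖ ^ 2)
    ⟨Unit, inferInstance, fun _ => a, by simp, by simp⟩⟩

lemma exists_positiveLinearMap_norm_sq_le (hC : ∀ a, ‖θ a‖ ≤ C * ‖a‖) (w : H) :
    ∃ f : A →ₚ[ℂ] ℂ, ∀ a, ‖θ a w‖ ^ 2 ≤ (f (star a * a)).re ∧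
      (f (star a * a)).re ≤ 36 * C ^ 8 * ‖θ a w‖ ^ 2 := by
  obtain ⟨g, hg⟩ := exists_linearMap_norm_sq_le hC w
  let f : A →ₗ[ℂ] ℂ := Module.Dual.extendRCLike (𝕜 := ℂ) (g ∘ₗ realPart)
  have f_apply (a : A) : f (star a * a) = g ⟨star a * a, .star_mul_self a⟩ := by
    have re_eq : realPart (star a * a) = ⟨star a * a, .star_mul_self a⟩ :=
      Subtype.ext (IsSelfAdjoint.star_mul_self a).coe_realPart
    have im_eq : realPart (Complex.I • (star a * a)) = 0 := by
      rw [realPart_I_smul, (IsSelfAdjoint.star_mul_self a).imaginaryPart, neg_zero]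
    simp [f, Module.Dual.extendRCLike_apply, re_eq, im_eq]
  refine ⟨PositiveLinearMap.mk₀ f fun x hx => ?_, fun a => ?_⟩
  · obtain ⟨y, rfl⟩ := CStarAlgebra.nonneg_iff_eq_star_mul_self.1 hx
    rw [f_apply]
    exact_mod_cast (sq_nonneg _).trans (hg y).1
  · rw [show PositiveLinearMap.mk₀ f _ (star a * a) = _ from f_apply a, Complex.ofReal_re]
    exact hg a

end Domination

section Symmetrizers

/-- `T` symmetrizes the algebra homomorphism `ρ` if `ρ` preserves adjoints for the sesquilinear
form `⟪T x, y⟫`; this is expressed here as an identity in an arbitrary star algebra. -/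
def IsSymmetrizer {A B : Type*} [Semiring A] [Algebra ℂ A] [Star A] [Semiring B] [Algebra ℂ B]
    [Star B] (ρ : A →ₐ[ℂ] B) (T : B) : Prop :=
  ∀ a, T * ρ a = star (ρ (star a)) * T

section StarAlgebra

variable {A B : Type*} [Semiring A] [Algebra ℂ A] [Semiring B] [Algebra ℂ B] [StarRing B]
  {ρ : A →ₐ[ℂ] B} {u : Bˣ}

lemma IsSymmetrizer.smul [Star A] {R : Type*} [CommSemiring R] [Algebra R B] {T : B}
    (hT : IsSymmetrizer ρ T) (r : R) : IsSymmetrizer ρ (r • T) := fun a => by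
  rw [smul_mul_assoc, mul_smul_comm, hT a]

lemma IsSymmetrizer.mul_map_star_mul_inv [InvolutiveStar A] (hu : IsSelfAdjoint (u : B))
    (h : IsSymmetrizer ρ (u * u : B)) (a : A) :
    (u * ρ (star a) * ↑u⁻¹ : B) = star (u * ρ a * ↑u⁻¹) :=
  calc (u * ρ (star a) * ↑u⁻¹ : B) = ↑u⁻¹ * (u * u * ρ (star a)) * ↑u⁻¹ := by simp [mul_assoc]
    _ = ↑u⁻¹ * star (ρ a) * u := by rw [h (star a), star_star]; simp [mul_assoc]
    _ = star (u * ρ a * ↑u⁻¹) := by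
      rw [star_mul, star_mul, hu.star_eq, (isSelfAdjoint_inv_unit hu).star_eq, mul_assoc]

lemma IsSymmetrizer.mul_commute_mul [Star A] {c : B} (hu : IsSymmetrizer ρ (u * u : B))
    (hc : ∀ a, Commute c (u * ρ a * ↑u⁻¹)) : IsSymmetrizer ρ (u * c * u : B) := fun a =>
  calc u * c * u * ρ a = u * (c * (u * ρ a * ↑u⁻¹)) * u := by simp [mul_assoc]
    _ = (u * u * ρ a) * ↑u⁻¹ * c * u := by rw [(hc a).eq]; simp only [mul_assoc]
    _ = star (ρ (star a)) * (u * c * u) := by rw [hu a]; simp [mul_assoc]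

end StarAlgebra

section Operators

open ContinuousLinearMap

variable {A : Type*} [Semiring A] [Algebra ℂ A] [Star A]
  {V W X : Type*} [NormedAddCommGroup V] [InnerProductSpace ℂ V] [CompleteSpace V]
  [NormedAddCommGroup W] [InnerProductSpace ℂ W] [CompleteSpace W]
  [NormedAddCommGroup X] [InnerProductSpace ℂ X] [CompleteSpace X]
  {ρ : A →ₐ[ℂ] (W →L[ℂ] W)}

lemma le_iff_forall_inner_le {W : Type*} [NormedAddCommGroup W] [InnerProductSpace ℂ W]
    {S T : W →L[ℂ] W} : S ≤ T ↔ ∀ x, ⟪S x, x⟫_ℂ ≤ ⟪T x, x⟫_ℂ := by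
  rw [ContinuousLinearMap.le_def, isPositive_iff_complex]
  refine forall_congr' fun x => ?_
  rw [← sub_nonneg (a := ⟪T x, x⟫_ℂ), ← inner_sub_left, ← sub_apply, Complex.nonneg_iff,
    Complex.ext_iff]
  simp [and_comm]

lemma isSymmetrizer_iff_inner {T : W →L[ℂ] W} :
    IsSymmetrizer ρ T ↔ ∀ a x y, ⟪T (ρ a x), y⟫_ℂ = ⟪T x, ρ (star a) y⟫_ℂ := by
  refine forall_congr' fun a => ?_
  simp_rw [ContinuousLinearMap.ext_iff, ← adjoint_inner_left, ← star_eq_adjoint]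
  exact forall_congr' fun x => ⟨fun h y => congrArg (inner ℂ · y) h, ext_inner_right ℂ⟩

/-- A representation by Hilbert space operators is unitarizable if it is symmetrized by an operator
`T ≥ 1`, i.e. if it preserves adjoints for some scalar product equivalent to the given one. -/
def IsUnitarizable (ρ : A →ₐ[ℂ] (W →L[ℂ] W)) : Prop :=
  ∃ T, 1 ≤ T ∧ IsSymmetrizer ρ T

lemma isUnitarizable_of_intertwines {σ : A →ₐ[ℂ] (V →L[ℂ] V)} {τ : A →ₐ[ℂ] (X →L[ℂ] X)}
    (hσ : IsUnitarizable σ) (hτ : IsUnitarizable τ) (p : W →L[ℂ] V) (q : W →L[ℂ] X)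
    (hp : ∀ a x, p (ρ a x) = σ a (p x)) (hq : ∀ a x, q (ρ a x) = τ a (q x)) {c : ℝ} (hc : 0 ≤ c)
    (h : ∀ x, ‖x‖ ^ 2 ≤ c * (‖p x‖ ^ 2 + ‖q x‖ ^ 2)) : IsUnitarizable ρ := by
  obtain ⟨S, one_le_S, hS⟩ := hσ
  obtain ⟨T, one_le_T, hT⟩ := hτ
  rw [isSymmetrizer_iff_inner] at hS hT
  let R : W →L[ℂ] W := (c : ℂ) • (adjoint p ∘L S ∘L p + adjoint q ∘L T ∘L q)
  have inner_R (x y : W) : ⟪R x, y⟫_ℂ = c * (⟪S (p x), p y⟫_ℂ + ⟪T (q x), q y⟫_ℂ) := by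
    simp only [R, smul_apply, add_apply, comp_apply, inner_smul_left, inner_add_left,
      adjoint_inner_left, Complex.conj_ofReal]
  refine ⟨R, le_iff_forall_inner_le.2 fun x => ?_, isSymmetrizer_iff_inner.2 fun a x y => ?_⟩
  · have hpx := le_iff_forall_inner_le.1 one_le_S (p x)
    have hqx := le_iff_forall_inner_le.1 one_le_T (q x)
    rw [one_apply_eq_self, inner_self_eq_norm_sq_to_K] at hpx hqx ⊢
    calc ((‖x‖ : ℂ) ^ 2) ≤ c * ((‖p x‖ : ℂ) ^ 2 + (‖q x‖ : ℂ) ^ 2) := by exact_mod_cast h x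
      _ ≤ c * (⟪S (p x), p x⟫_ℂ + ⟪T (q x), q x⟫_ℂ) := by
        have : (0 : ℂ) ≤ c := by exact_mod_cast hc
        exact mul_le_mul_of_nonneg_left (add_le_add hpx hqx) this
      _ = ⟪R x, x⟫_ℂ := (inner_R x x).symm
  · rw [inner_R, inner_R, hp, hq, hp, hq, hS, hT]

end Operators

end Symmetrizers

section Subrepresentations

variable {A : Type*} [Semiring A] [Algebra ℂ A]
  {H : Type*} [NormedAddCommGroup H] [InnerProductSpace ℂ H]

/-- The restriction of a representation to an invariant subspace. -/
noncomputable def subrepresentation (θ : A →ₐ[ℂ] (H →L[ℂ] H)) (V : Submodule ℂ H)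
    (hV : ∀ a, ∀ x ∈ V, θ a x ∈ V) : A →ₐ[ℂ] (V →L[ℂ] V) :=
  AlgHom.ofLinearMap
    { toFun := fun a => (θ a).restrict (hV a)
      map_add' := fun a b => by ext; simp
      map_smul' := fun c a => by ext; simp }
    (by ext; simp) (fun a b => by ext; simp)

@[simp] lemma coe_subrepresentation_apply (θ : A →ₐ[ℂ] (H →L[ℂ] H)) (V : Submodule ℂ H)
    (hV : ∀ a, ∀ x ∈ V, θ a x ∈ V) (a : A) (x : V) :
    (subrepresentation θ V hV a x : H) = θ a x := rfl

lemma norm_subrepresentation_le (θ : A →ₐ[ℂ] (H →L[ℂ] H)) (V : Submodule ℂ H)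
    (hV : ∀ a, ∀ x ∈ V, θ a x ∈ V) (a : A) : ‖subrepresentation θ V hV a‖ ≤ ‖θ a‖ :=
  ContinuousLinearMap.opNorm_le_bound _ (norm_nonneg _) fun x => (θ a).le_opNorm x

/-- The closure of the orbit `{θ a w | a ∈ A}`, which is an invariant subspace. -/
noncomputable def cyclicSubspace (θ : A →ₐ[ℂ] (H →L[ℂ] H)) (w : H) : Submodule ℂ H :=
  (LinearMap.range
    ((ContinuousLinearMap.apply ℂ H w).toLinearMap ∘ₗ θ.toLinearMap)).topologicalClosure

lemma apply_mem_cyclicSubspace (θ : A →ₐ[ℂ] (H →L[ℂ] H)) (w : H) (a : A) :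
    θ a w ∈ cyclicSubspace θ w :=
  Submodule.le_topologicalClosure _ ⟨a, rfl⟩

lemma mem_cyclicSubspace_self (θ : A →ₐ[ℂ] (H →L[ℂ] H)) (w : H) : w ∈ cyclicSubspace θ w := by
  simpa using apply_mem_cyclicSubspace θ w 1

lemma isClosed_cyclicSubspace (θ : A →ₐ[ℂ] (H →L[ℂ] H)) (w : H) :
    IsClosed (cyclicSubspace θ w : Set H) :=
  Submodule.isClosed_topologicalClosure _

lemma map_mem_cyclicSubspace (θ : A →ₐ[ℂ] (H →L[ℂ] H)) (w : H) (a : A) :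
    ∀ x ∈ cyclicSubspace θ w, θ a x ∈ cyclicSubspace θ w := by
  refine Submodule.topologicalClosure_minimal _
    (t := (cyclicSubspace θ w).comap (θ a).toLinearMap) ?_
    ((isClosed_cyclicSubspace θ w).preimage (θ a).continuous)
  rintro _ ⟨b, rfl⟩
  simpa using apply_mem_cyclicSubspace θ w (a * b)

/-- The orbit map of `w`, as a map into the cyclic subspace generated by `w`. -/
noncomputable def cyclicMap (θ : A →ₐ[ℂ] (H →L[ℂ] H)) (w : H) : A →ₗ[ℂ] cyclicSubspace θ w :=
  ((ContinuousLinearMap.apply ℂ H w).toLinearMap ∘ₗ θ.toLinearMap).codRestrict _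
    (apply_mem_cyclicSubspace θ w)

lemma coe_cyclicMap (θ : A →ₐ[ℂ] (H →L[ℂ] H)) (w : H) (a : A) :
    (cyclicMap θ w a : H) = θ a w := rfl

lemma denseRange_cyclicMap (θ : A →ₐ[ℂ] (H →L[ℂ] H)) (w : H) :
    DenseRange (cyclicMap θ w) := fun x => by
  rw [closure_subtype, ← Set.range_comp]
  exact x.2

/-- The restriction of a representation to a cyclic subspace. -/
noncomputable def cyclicRepresentation (θ : A →ₐ[ℂ] (H →L[ℂ] H)) (w : H) :
    A →ₐ[ℂ] (cyclicSubspace θ w →L[ℂ] cyclicSubspace θ w) :=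
  subrepresentation θ (cyclicSubspace θ w) (map_mem_cyclicSubspace θ w)

lemma cyclicRepresentation_cyclicMap (θ : A →ₐ[ℂ] (H →L[ℂ] H)) (w : H) (a b : A) :
    cyclicRepresentation θ w a (cyclicMap θ w b) = cyclicMap θ w (a * b) :=
  Subtype.ext (by rw [cyclicRepresentation, coe_subrepresentation_apply]; simp [coe_cyclicMap])

end Subrepresentations

section GNS

variable {A : Type*} [CStarAlgebra A] [PartialOrder A] [StarOrderedRing A]

lemma isUnitarizable_starAlgHom {K : Type*} [NormedAddCommGroup K] [InnerProductSpace ℂ K]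
    [CompleteSpace K] {B : Type*} [Semiring B] [Algebra ℂ B] [InvolutiveStar B]
    (π : B →⋆ₐ[ℂ] (K →L[ℂ] K)) : IsUnitarizable (π : B →ₐ[ℂ] (K →L[ℂ] K)) :=
  ⟨1, le_rfl, fun a => by simp [← map_star]⟩

variable {H : Type*} [NormedAddCommGroup H] [InnerProductSpace ℂ H]
  {θ : A →ₐ[ℂ] (H →L[ℂ] H)}

lemma exists_intertwiner_gns {D : ℝ} {w : H} {f : A →ₚ[ℂ] ℂ}
    (hf : ∀ a, ‖θ a w‖ ^ 2 ≤ (f (star a * a)).re ∧ (f (star a * a)).re ≤ D ^ 2 * ‖θ a w‖ ^ 2) :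
    ∃ R : cyclicSubspace θ w →L[ℂ] f.GNS, (∀ x, ‖x‖ ≤ ‖R x‖) ∧
      ∀ a x, R (cyclicRepresentation θ w a x) = f.gnsStarAlgHom a (R x) := by
  let j : A →ₗ[ℂ] f.GNS :=
    (UniformSpace.Completion.toComplL (𝕜 := ℂ) (E := f.PreGNS)).toLinearMap ∘ₗ
      f.toPreGNS.toLinearMap
  have norm_j_sq (a : A) : ‖j a‖ ^ 2 = (f (star a * a)).re := by
    change ‖((f.toPreGNS a : f.PreGNS) : f.GNS)‖ ^ 2 = _
    rw [UniformSpace.Completion.norm_coe, ← Complex.ofReal_re (‖f.toPreGNS a‖ ^ 2)]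
    exact congrArg Complex.re ((Complex.ofReal_pow _ _).trans (f.preGNS_norm_sq _))
  have norm_j_le (a : A) : ‖j a‖ ≤ |D| * ‖cyclicMap θ w a‖ := by
    rw [← sq_le_sq₀ (norm_nonneg _) (by positivity), norm_j_sq, mul_pow, sq_abs]
    exact (hf a).2
  have dense := denseRange_cyclicMap θ w
  let R := j.extendOfNorm (cyclicMap θ w)
  have R_cyclicMap (a : A) : R (cyclicMap θ w a) = j a :=
    LinearMap.extendOfNorm_eq dense ⟨_, norm_j_le⟩ a
  refine ⟨R, fun x => ?_, fun a x => ?_⟩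
  · refine dense.induction_on x (isClosed_le (by fun_prop) (by fun_prop)) fun a => ?_
    rw [R_cyclicMap, ← sq_le_sq₀ (norm_nonneg _) (norm_nonneg _), norm_j_sq]
    exact (hf a).1
  · refine dense.induction_on x (isClosed_eq (by fun_prop) (by fun_prop)) fun b => ?_
    rw [cyclicRepresentation_cyclicMap, R_cyclicMap, R_cyclicMap]
    exact (f.gnsNonUnitalStarAlgHom_apply_coe (a := a) (b := f.toPreGNS b)).symm

variable [CompleteSpace H]

instance completeSpace_cyclicSubspace (w : H) : CompleteSpace (cyclicSubspace θ w) :=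
  (isClosed_cyclicSubspace θ w).completeSpace_coe

lemma isUnitarizable_cyclicRepresentation {C : ℝ≥0} (hC : ∀ a, ‖θ a‖ ≤ C * ‖a‖) (w : H) :
    IsUnitarizable (cyclicRepresentation θ w) := by
  obtain ⟨f, hf⟩ := exists_positiveLinearMap_norm_sq_le hC w
  obtain ⟨R, le_norm_R, hR⟩ := exists_intertwiner_gns (D := 6 * C ^ 4)
    fun a => ⟨(hf a).1, (hf a).2.trans_eq (by ring)⟩
  have hπ := isUnitarizable_starAlgHom f.gnsStarAlgHom
  refine isUnitarizable_of_intertwines hπ hπ R R hR hR zero_le_one fun x => ?_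
  nlinarith [le_norm_R x, norm_nonneg x]

end GNS

section TotalReduction

/-- The total reduction property: every closed invariant subspace of a continuous Hilbert space
representation has a closed invariant complement. -/
def TotalReductionProperty (A : Type u) [NormedRing A] [NormedAlgebra ℂ A] : Prop :=
  ∀ (K : Type u) [NormedAddCommGroup K] [InnerProductSpace ℂ K] [CompleteSpace K],
    ∀ θ : A →ₐ[ℂ] (K →L[ℂ] K), Continuous (⇑θ) →
    ∀ V : Submodule ℂ K, IsClosed (V : Set K) → (∀ a : A, ∀ x ∈ V, θ a x ∈ V) →
    ∃ W : Submodule ℂ K, IsClosed (W : Set K) ∧ (∀ a : A, ∀ x ∈ W, θ a x ∈ W) ∧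
      V ⊓ W = ⊥ ∧ V ⊔ W = ⊤

variable {A : Type u} [NormedRing A] [NormedAlgebra ℂ A]

theorem TotalReductionProperty.exists_projection (htrp : TotalReductionProperty A) {K : Type u}
    [NormedAddCommGroup K] [InnerProductSpace ℂ K] [CompleteSpace K] {θ : A →ₐ[ℂ] (K →L[ℂ] K)}
    (hθ : Continuous θ) {V : Submodule ℂ K} (hV : IsClosed (V : Set K))
    (hθV : ∀ a, ∀ x ∈ V, θ a x ∈ V) :
    ∃ Q : K →L[ℂ] K, (∀ x, Q x ∈ V) ∧ (∀ x ∈ V, Q x = x) ∧ ∀ a x, Q (θ a x) = θ a (Q x) := by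
  obtain ⟨W, hW, hθW, inf_eq, sup_eq⟩ := htrp K θ hθ V hV hθV
  have compl : V.IsTopCompl W := Submodule.IsCompl.isTopCompl_of_isClosed
    ⟨disjoint_iff.2 inf_eq, codisjoint_iff.2 sup_eq⟩ hV hW
  refine ⟨V.projectionL W compl, Submodule.projectionL_apply_mem compl,
    fun x hx => Submodule.projectionL_apply_left compl ⟨x, hx⟩, fun a x => ?_⟩
  have hV_mem : V.projectionL W compl x ∈ V := Submodule.projectionL_apply_mem compl x
  have hW_mem : W.projectionL V compl.symm x ∈ W := Submodule.projectionL_apply_mem compl.symm x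
  conv_lhs => rw [← Submodule.projectionL_add_projectionL_eq_self compl x, map_add, map_add]
  rw [Submodule.projectionL_apply_left compl ⟨_, hθV a _ hV_mem⟩,
    Submodule.projectionL_apply_right compl ⟨_, hθW a _ hW_mem⟩, add_zero]

theorem TotalReductionProperty.exists_projection_of_equiv (htrp : TotalReductionProperty A)
    {E : Type*} {K : Type u} [NormedAddCommGroup E] [NormedSpace ℂ E]
    [NormedAddCommGroup K] [InnerProductSpace ℂ K] [CompleteSpace K] (e : E ≃L[ℂ] K)
    {θ : A →ₐ[ℂ] (E →L[ℂ] E)} (hθ : Continuous θ) {V : Submodule ℂ E}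
    (hV : IsClosed (V : Set E)) (hθV : ∀ a, ∀ x ∈ V, θ a x ∈ V) :
    ∃ Q : E →L[ℂ] E, (∀ x, Q x ∈ V) ∧ (∀ x ∈ V, Q x = x) ∧ ∀ a x, Q (θ a x) = θ a (Q x) := by
  let θ' : A →ₐ[ℂ] (K →L[ℂ] K) := (e.conjContinuousAlgEquiv.toAlgEquiv : _ →ₐ[ℂ] _).comp θ
  have θ'_apply (a : A) (x : K) : θ' a x = e (θ a (e.symm x)) := rfl
  obtain ⟨Q, Q_mem, Q_eq, hQ⟩ := htrp.exists_projection (θ := θ')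
    (V := V.comap e.symm.toLinearEquiv.toLinearMap)
    (e.conjContinuousAlgEquiv.continuous.comp hθ) (hV.preimage e.symm.continuous)
    fun a x hx => by simpa [θ'_apply] using hθV a _ hx
  refine ⟨e.symm ∘L Q ∘L e, fun x => Q_mem (e x), fun x hx => ?_, fun a x => ?_⟩
  · simp [Q_eq (e x) (by simpa using hx)]
  · have := hQ a (e x)
    simp only [θ'_apply, ContinuousLinearEquiv.symm_apply_apply] at this
    simp [this]

end TotalReduction

section Derivations

open ContinuousLinearMap

variable {A : Type u} [NormedRing A] [NormedAlgebra ℂ A]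

/-- The representation `a ↦ [π a, δ a; 0, π a]` on `K × K` attached to a derivation `δ` along
`π`. -/
noncomputable def triangularRepresentation {K : Type*} [NormedAddCommGroup K] [NormedSpace ℂ K]
    (π : A →ₐ[ℂ] (K →L[ℂ] K)) (δ : A →ₗ[ℂ] (K →L[ℂ] K))
    (hδ : ∀ a b, δ (a * b) = π a * δ b + δ a * π b) : A →ₐ[ℂ] (K × K →L[ℂ] K × K) :=
  AlgHom.ofLinearMap
    { toFun := fun a => inl ℂ K K ∘L (π a ∘L fst ℂ K K + δ a ∘L snd ℂ K K) +
        inr ℂ K K ∘L π a ∘L snd ℂ K K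
      map_add' := fun a b => by ext <;> simp
      map_smul' := fun c a => by ext <;> simp }
    (by
      have : δ 1 = 0 := by simpa using hδ 1 1
      ext <;> simp [this])
    (fun a b => by ext <;> simp [hδ])

theorem TotalReductionProperty.exists_eq_commutator (htrp : TotalReductionProperty A)
    {K : Type u} [NormedAddCommGroup K] [InnerProductSpace ℂ K] [CompleteSpace K]
    {π : A →ₐ[ℂ] (K →L[ℂ] K)} {δ : A →ₗ[ℂ] (K →L[ℂ] K)}
    (hπ : Continuous π) (hδ : Continuous δ)
    (hδ_mul : ∀ a b, δ (a * b) = π a * δ b + δ a * π b) :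
    ∃ T : K →L[ℂ] K, ∀ a, δ a = T * π a - π a * T := by
  let θ := triangularRepresentation π δ hδ_mul
  have θ_apply (a : A) (x : K × K) : θ a x = (π a x.1 + δ a x.2, π a x.2) := by
    simp [θ, triangularRepresentation]
  have hθ : Continuous θ := by
    change Continuous fun a => inl ℂ K K ∘L (π a ∘L fst ℂ K K + δ a ∘L snd ℂ K K) +
        inr ℂ K K ∘L π a ∘L snd ℂ K K
    fun_prop
  obtain ⟨Q, Q_mem, Q_eq, hQ⟩ := htrp.exists_projection_of_equiv
    (WithLp.prodContinuousLinearEquiv 2 ℂ K K).symm hθ (V := (snd ℂ K K).ker)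
    (snd ℂ K K).isClosed_ker fun a x hx => by simp_all
  refine ⟨-(fst ℂ K K ∘L Q ∘L inr ℂ K K), fun a => ?_⟩
  ext y
  have Q_snd : (Q (0, y)).2 = 0 := Q_mem (0, y)
  have Q_fst : Q (δ a y, 0) = (δ a y, 0) := Q_eq _ rfl
  have commute : δ a y + (Q (0, π a y)).1 = π a (Q (0, y)).1 := by
    have h := hQ a (0, y)
    have split : θ a (0, y) = (δ a y, 0) + (0, π a y) := by simp [θ_apply]
    rw [split, map_add, Q_fst] at h
    simpa [θ_apply, Q_snd] using congrArg Prod.fst h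
  simp [← commute]

variable {ι : Type*} {Z : ι → Type*} [∀ i, NormedAddCommGroup (Z i)]
  [∀ i, InnerProductSpace ℂ (Z i)] {C : ℝ≥0}

/-- The direct sum of a uniformly bounded family of operator valued linear maps. -/
noncomputable def directSumMap (φ : ∀ i, A →ₗ[ℂ] (Z i →L[ℂ] Z i))
    (hφ : ∀ i a, ‖φ i a‖ ≤ C * ‖a‖) : A →L[ℂ] (lp Z 2 →L[ℂ] lp Z 2) :=
  LinearMap.mkContinuous
    { toFun := fun a => lp.mapCLM 2 (fun i => φ i a) (by positivity) (hφ · a)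
      map_add' := fun a b => by ext; simp
      map_smul' := fun c a => by ext; simp }
    C fun a => lp.norm_mapCLM_le 2 (fun i => φ i a) (by positivity) (hφ · a)

@[simp] lemma directSumMap_apply (φ : ∀ i, A →ₗ[ℂ] (Z i →L[ℂ] Z i))
    (hφ : ∀ i a, ‖φ i a‖ ≤ C * ‖a‖) (a : A) (x : lp Z 2) (i : ι) :
    directSumMap φ hφ a x i = φ i a (x i) := rfl

/-- The direct sum of a uniformly bounded family of representations. -/
noncomputable def directSumRepresentation (π : ∀ i, A →ₐ[ℂ] (Z i →L[ℂ] Z i))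
    (hπ : ∀ i a, ‖π i a‖ ≤ C * ‖a‖) : A →ₐ[ℂ] (lp Z 2 →L[ℂ] lp Z 2) :=
  AlgHom.ofLinearMap (directSumMap (fun i => (π i).toLinearMap) hπ)
    (by ext x i; exact congrArg (· (x i)) (map_one (π i)))
    (fun a b => by ext x i; exact congrArg (· (x i)) (map_mul (π i) a b))

@[simp] lemma directSumRepresentation_apply (π : ∀ i, A →ₐ[ℂ] (Z i →L[ℂ] Z i))
    (hπ : ∀ i a, ‖π i a‖ ≤ C * ‖a‖) (a : A) (x : lp Z 2) (i : ι) :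
    directSumRepresentation π hπ a x i = π i a (x i) := rfl

theorem TotalReductionProperty.exists_uniform_eq_commutator (htrp : TotalReductionProperty A)
    (C : ℝ≥0) :
    ∃ M : ℝ, ∀ (K : Type u) [NormedAddCommGroup K] [InnerProductSpace ℂ K] [CompleteSpace K]
      (π : A →ₐ[ℂ] (K →L[ℂ] K)) (δ : A →ₗ[ℂ] (K →L[ℂ] K)), (∀ a, ‖π a‖ ≤ C * ‖a‖) →
      (∀ a, ‖δ a‖ ≤ C * ‖a‖) → (∀ a b, δ (a * b) = π a * δ b + δ a * π b) →
      ∃ T : K →L[ℂ] K, ‖T‖ ≤ M ∧ ∀ a, δ a = T * π a - π a * T := by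
  by_contra! counterexample
  choose Z _ _ _ π δ hπ hδ hδ_mul T_large using fun n : ℕ => counterexample n
  have hΔ_mul (a b : A) : directSumMap δ hδ (a * b) = directSumRepresentation π hπ a *
      directSumMap δ hδ b + directSumMap δ hδ a * directSumRepresentation π hπ b := by
    ext x n
    simp [hδ_mul]
  obtain ⟨T, hT⟩ := htrp.exists_eq_commutator (δ := (directSumMap δ hδ).toLinearMap)
    (π := directSumRepresentation π hπ)
    (directSumMap _ _).continuous (directSumMap δ hδ).continuous hΔ_mul
  obtain ⟨n, hn⟩ := exists_nat_ge ‖T‖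
  let S : Z n →L[ℂ] Z n := lp.evalCLM ℂ Z 2 n ∘L T ∘L lp.singleContinuousLinearMap ℂ Z 2 n
  have norm_S_le : ‖S‖ ≤ n := by
    refine (S.opNorm_le_bound (norm_nonneg T) fun x => ?_).trans hn
    calc ‖T (lp.single 2 n x) n‖ ≤ ‖T (lp.single 2 n x)‖ := lp.norm_apply_le_norm two_ne_zero _ n
      _ ≤ ‖T‖ * ‖x‖ := by simpa only [lp.norm_single two_pos] using T.le_opNorm (lp.single 2 n x)
  obtain ⟨a, ha⟩ := T_large n S norm_S_le
  refine ha (ContinuousLinearMap.ext fun x => ?_)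
  have single_apply : directSumRepresentation π hπ a (lp.single 2 n x) =
      lp.single 2 n (π n a x) := by
    ext m
    obtain rfl | hm := eq_or_ne m n
    · simp
    · simp [hm]
  have := congrArg (· n) (congrArg Subtype.val (DFunLike.congr_fun (hT a) (lp.single 2 n x)))
  have eval_apply (y : lp Z 2) : lp.evalCLM ℂ Z 2 n y = y n := rfl
  simpa [S, eval_apply, ← single_apply] using this

end Derivations

section ExponentialFlow

open NormedSpace

section BanachAlgebra

variable {B : Type*} [NormedRing B] [NormedAlgebra ℂ B] [CompleteSpace B]

/-- The one-parameter group `z ↦ exp (z • L)` of invertible elements generated by `L`. -/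
noncomputable def expGroup (L : B) (z : ℂ) : Bˣ :=
  letI : NormedAlgebra ℚ B := .restrictScalars ℚ ℂ B
  letI := invertibleExp (z • L)
  unitOfInvertible (exp (z • L))

lemma coe_expGroup (L : B) (z : ℂ) : (expGroup L z : B) = exp (z • L) := rfl

lemma expGroup_zero (L : B) : expGroup L 0 = 1 := by
  ext
  simp [coe_expGroup]

lemma expGroup_add (L : B) (z w : ℂ) : expGroup L (z + w) = expGroup L z * expGroup L w := by
  let _ : NormedAlgebra ℚ B := .restrictScalars ℚ ℂ B
  ext
  rw [Units.val_mul, coe_expGroup, coe_expGroup, coe_expGroup, add_smul,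
    exp_add_of_commute (((Commute.refl L).smul_left z).smul_right w)]

lemma expGroup_neg (L : B) (z : ℂ) : expGroup L (-z) = (expGroup L z)⁻¹ :=
  eq_inv_of_mul_eq_one_left <| by rw [← expGroup_add, neg_add_cancel, expGroup_zero]

lemma hasDerivAt_expGroup (L : B) (z : ℂ) :
    HasDerivAt (fun w => (expGroup L w : B)) (expGroup L z * L) z :=
  hasDerivAt_exp_smul_const L z

/-- The flow `z ↦ exp (z • L) * X * exp (-z • L)` of inner automorphisms generated by `L`. -/
noncomputable def conjFlow (L X : B) (z : ℂ) : B :=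
  expGroup L z * X * expGroup L (-z)

lemma conjFlow_zero (L X : B) : conjFlow L X 0 = X := by
  simp [conjFlow, expGroup_zero]

lemma hasDerivAt_conjFlow (L X : B) (z : ℂ) :
    HasDerivAt (conjFlow L X) (expGroup L z * (L * X - X * L) * expGroup L (-z)) z := by
  have hneg : HasDerivAt (fun w => (expGroup L (-w) : B)) (-(expGroup L (-z) * L)) z := by
    simpa [Function.comp_def] using (hasDerivAt_expGroup L (-z)).scomp z (hasDerivAt_neg z)
  have comm : (expGroup L (-z) * L : B) = L * expGroup L (-z) :=
    (((Commute.refl L).smul_left (-z)).exp_left).eq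
  refine (((hasDerivAt_expGroup L z).mul_const X).mul hneg).congr_deriv ?_
  rw [comm]
  noncomm_ring

end BanachAlgebra

section CStarAlgebra

variable {B : Type*} [CStarAlgebra B] {L : B}

lemma star_coe_expGroup (hL : IsSelfAdjoint L) (z : ℂ) :
    star (expGroup L z : B) = expGroup L (star z) := by
  rw [coe_expGroup, coe_expGroup, star_exp, star_smul, hL.star_eq]

lemma expGroup_mul_I_mem_unitary (hL : IsSelfAdjoint L) (y : ℝ) :
    (expGroup L (y * Complex.I) : B) ∈ unitary B := by
  have hstar : star (expGroup L (y * Complex.I) : B) = ↑(expGroup L (y * Complex.I))⁻¹ := by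
    rw [star_coe_expGroup hL, ← expGroup_neg]
    simp
  rw [Unitary.mem_iff, hstar]
  exact ⟨Units.inv_mul _, Units.mul_inv _⟩

lemma norm_conjFlow_eq_norm_conjFlow_re (hL : IsSelfAdjoint L) (X : B) (z : ℂ) :
    ‖conjFlow L X z‖ = ‖conjFlow L X z.re‖ := by
  have split : conjFlow L X z = expGroup L (z.im * Complex.I) *
      (conjFlow L X z.re * expGroup L ((-z.im : ℝ) * Complex.I)) := by
    conv_lhs => rw [← Complex.re_add_im z]
    rw [conjFlow, add_comm, expGroup_add, neg_add, add_comm, expGroup_add]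
    simp [conjFlow, mul_assoc]
  rw [split, CStarRing.norm_mem_unitary_mul _ (expGroup_mul_I_mem_unitary hL _),
    CStarRing.norm_mul_mem_unitary _ (expGroup_mul_I_mem_unitary hL _)]

-- The flow is an entire function whose norm depends only on `z.re`, so the three lines theorem
-- applies.
lemma norm_conjFlow_le (hL : IsSelfAdjoint L) {X : B} {c : ℝ}
    (hneg : ‖conjFlow L X (-1)‖ ≤ c) (hpos : ‖conjFlow L X 1‖ ≤ c) {z : ℂ}
    (hz : z.re ∈ Set.Icc (-1) 1) : ‖conjFlow L X z‖ ≤ c := by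
  have hdiff : Differentiable ℂ (conjFlow L X) := fun z =>
    (hasDerivAt_conjFlow L X z).differentiableAt
  have hcont : Continuous fun t : ℝ => conjFlow L X t :=
    hdiff.continuous.comp Complex.continuous_ofReal
  obtain ⟨D, hD⟩ := (isCompact_Icc (a := (-1 : ℝ)) (b := 1)).exists_bound_of_continuousOn
    hcont.continuousOn
  refine PhragmenLindelof.vertical_strip (a := -1) (b := 1) hdiff.diffContOnCl
    ⟨0, by positivity, 0,
      .of_bound D (Filter.eventually_inf_principal.2 (.of_forall fun w hw => ?_))⟩
    (fun w hw => ?_) (fun w hw => ?_) hz.1 hz.2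
  · simpa [norm_conjFlow_eq_norm_conjFlow_re hL X w] using hD w.re (Set.Ioo_subset_Icc_self hw)
  · simpa [norm_conjFlow_eq_norm_conjFlow_re hL X w, hw] using hneg
  · simpa [norm_conjFlow_eq_norm_conjFlow_re hL X w, hw] using hpos

lemma norm_commutator_le (hL : IsSelfAdjoint L) {X : B} {c : ℝ}
    (hneg : ‖conjFlow L X (-1)‖ ≤ c) (hpos : ‖conjFlow L X 1‖ ≤ c) : ‖L * X - X * L‖ ≤ c := by
  have hderiv := hasDerivAt_conjFlow L X
  have hdiff : Differentiable ℂ (conjFlow L X) := fun z => (hderiv z).differentiableAt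
  have := Complex.norm_deriv_le_of_forall_mem_sphere_norm_le one_pos hdiff.diffContOnCl (c := 0)
    fun z hz => norm_conjFlow_le hL hneg hpos
      (abs_le.1 ((Complex.abs_re_le_norm z).trans (by simpa using hz.le)))
  simpa [(hderiv 0).deriv, expGroup_zero] using this

lemma coe_expGroup_ofReal (hL : IsSelfAdjoint L) (t : ℝ) :
    (expGroup L t : B) = cfc (fun x => Real.exp (t * x)) L := by
  rw [coe_expGroup, Complex.coe_smul,
    ← CFC.real_exp_eq_normedSpace_exp ((IsSelfAdjoint.all t).smul hL),
    ← cfc_comp_smul t Real.exp L]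
  rfl

lemma isSelfAdjoint_expGroup (hL : IsSelfAdjoint L) (t : ℝ) : IsSelfAdjoint (expGroup L t : B) := by
  simp [isSelfAdjoint_iff, star_coe_expGroup hL]

variable [PartialOrder B] [StarOrderedRing B]

lemma one_le_expGroup (hL : 0 ≤ L) {t : ℝ} (ht : 0 ≤ t) : (1 : B) ≤ expGroup L t := by
  rw [coe_expGroup_ofReal (.of_nonneg hL), ← map_one (algebraMap ℝ B)]
  exact algebraMap_le_cfc _ _ _ fun x hx =>
    Real.one_le_exp (mul_nonneg ht (spectrum_nonneg_of_nonneg hL hx))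

lemma expGroup_le_algebraMap {l t : ℝ} (hL : IsSelfAdjoint L) (hl : L ≤ algebraMap ℝ B l)
    (ht : 0 ≤ t) : (expGroup L t : B) ≤ algebraMap ℝ B (Real.exp (t * l)) := by
  rw [le_algebraMap_iff_spectrum_le] at hl
  rw [coe_expGroup_ofReal hL]
  exact cfc_le_algebraMap _ _ _ fun x hx =>
    Real.exp_le_exp.2 (mul_le_mul_of_nonneg_left (hl x hx) ht)

lemma exists_expGroup_mul_self_eq {T : B} {t : ℝ} (one_le : 1 ≤ T)
    (le_exp : T ≤ algebraMap ℝ B (Real.exp t)) :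
    ∃ L : B, 0 ≤ L ∧ L ≤ algebraMap ℝ B (t / 2) ∧ (expGroup L 1 * expGroup L 1 : B) = T := by
  have hT : IsStrictlyPositive T := .of_le (by simp) one_le
  have log_nonneg : 0 ≤ CFC.log T := by
    simpa only [CFC.log_one] using CFC.log_le_log one_le
  have log_le : CFC.log T ≤ algebraMap ℝ B t := by
    simpa only [CFC.log_algebraMap, Real.log_exp] using CFC.log_le_log le_exp
  refine ⟨(1 / 2 : ℝ) • CFC.log T, smul_nonneg one_half_pos.le log_nonneg, ?_, ?_⟩
  · calc (1 / 2 : ℝ) • CFC.log T ≤ (1 / 2 : ℝ) • algebraMap ℝ B t :=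
          smul_le_smul_of_nonneg_left (β := B) log_le one_half_pos.le
      _ = algebraMap ℝ B (t / 2) := by
        rw [Algebra.smul_def, ← map_mul, one_div, inv_mul_eq_div]
  · have smul_eq : (1 + 1 : ℂ) • (1 / 2 : ℝ) • CFC.log T = CFC.log T := by module
    rw [← Units.val_mul, ← expGroup_add, coe_expGroup, smul_eq, CFC.exp_log T]

end CStarAlgebra

end ExponentialFlow

section Improvement

open ComplexStarModule

section BanachAlgebra

variable {B : Type*} [NormedRing B] [NormedAlgebra ℂ B] [CompleteSpace B]

/-- The product `exp (s • L) * exp (-2 • s • c) * exp (s • L)`, whose derivative at `s = 0` is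
`2 • (L - c)`, hence small when `c` is close to `L`. -/
noncomputable def expSandwich (L c : B) (s : ℝ) : Bˣ :=
  expGroup L s * expGroup c (-2 * s) * expGroup L s

lemma expGroup_one_mul_mul_expGroup_one (L c : B) (s : ℝ) :
    expGroup L 1 * expGroup c (-2 * s) * expGroup L 1 =
      expGroup L ↑(1 - s) * expSandwich L c s * expGroup L ↑(1 - s) := by
  have left : expGroup L 1 = expGroup L ↑(1 - s) * expGroup L s := by simp [← expGroup_add]
  have right : expGroup L 1 = expGroup L s * expGroup L ↑(1 - s) := by simp [← expGroup_add]
  calc expGroup L 1 * expGroup c (-2 * s) * expGroup L 1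
      = (expGroup L ↑(1 - s) * expGroup L s) * expGroup c (-2 * s) *
          (expGroup L s * expGroup L ↑(1 - s)) := by rw [← left, ← right]
    _ = _ := by simp only [expSandwich, mul_assoc]

lemma hasDerivAt_expSandwich_zero (L c : B) :
    HasDerivAt (fun s => (expSandwich L c s : B)) ((2 : ℝ) • (L - c)) 0 := by
  have hasDerivAt_zero (X : B) (k : ℂ) :
      HasDerivAt (fun s : ℝ => (expGroup X (k * s) : B)) (k • X) 0 := by
    have h : HasDerivAt (fun s : ℝ => k * s) k 0 := by
      simpa using (Complex.ofRealCLM.hasDerivAt (x := 0)).const_mul k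
    simpa [Function.comp_def, expGroup_zero] using
      (hasDerivAt_expGroup X (k * (0 : ℝ))).scomp (0 : ℝ) h
  have hL : HasDerivAt (fun s : ℝ => (expGroup L s : B)) L 0 := by
    simpa using hasDerivAt_zero L 1
  refine ((hL.mul (hasDerivAt_zero c (-2))).mul hL).congr_deriv ?_
  simp only [Pi.mul_apply, Complex.ofReal_zero, mul_zero, expGroup_zero, Units.val_one, one_mul,
    mul_one]
  module

lemma eventually_norm_expSandwich_sub_one_le (L c : B) {m : ℝ} (hm : 2 * ‖L - c‖ < m) :
    ∀ᶠ s in nhdsWithin (0 : ℝ) (Set.Ioi 0), ‖(expSandwich L c s - 1 : B)‖ ≤ s * m := by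
  have norm_deriv_lt : ‖(2 : ℝ) • (L - c)‖ < m := by simpa [norm_smul] using hm
  filter_upwards [(hasDerivAt_expSandwich_zero L c).hasDerivWithinAt.limsup_norm_slope_le
    norm_deriv_lt, self_mem_nhdsWithin] with s hs s_pos
  have zero_eq : (expSandwich L c 0 : B) = 1 := by simp [expSandwich, expGroup_zero]
  rw [zero_eq, sub_zero, Real.norm_of_nonneg (le_of_lt s_pos), inv_mul_lt_iff₀ s_pos] at hs
  exact hs.le

end BanachAlgebra

section CStarAlgebra

variable {B : Type*} [CStarAlgebra B] {L c : B}

lemma isSelfAdjoint_expSandwich (hL : IsSelfAdjoint L) (hc : IsSelfAdjoint c) (s : ℝ) :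
    IsSelfAdjoint (expSandwich L c s : B) := by
  have := (isSelfAdjoint_expGroup hc (-2 * s)).conjugate_self (isSelfAdjoint_expGroup hL s)
  simpa [expSandwich] using this

variable [PartialOrder B] [StarOrderedRing B]

lemma algebraMap_le_and_le_of_norm_sub_one_le {G : B} (hG : IsSelfAdjoint G) {e : ℝ}
    (h : ‖G - 1‖ ≤ e) : algebraMap ℝ B (1 - e) ≤ G ∧ G ≤ algebraMap ℝ B (1 + e) := by
  have hG1 : IsSelfAdjoint (G - 1) := hG.sub (.one B)
  have norm_le : algebraMap ℝ B ‖G - 1‖ ≤ algebraMap ℝ B e := algebraMap_mono B h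
  rw [map_sub, map_add, map_one]
  constructor
  · rw [sub_le_comm, ← neg_sub]
    exact (neg_le.1 hG1.neg_algebraMap_norm_le_self).trans norm_le
  · exact sub_le_iff_le_add'.1 (hG1.le_algebraMap_norm_self.trans norm_le)

lemma expGroup_mul_mul_expGroup_bounds {G : B} {e l r : ℝ} (hL : 0 ≤ L)
    (hl : L ≤ algebraMap ℝ B l) (hG : IsSelfAdjoint G) (h : ‖G - 1‖ ≤ e) (he : e ≤ 1)
    (hr : 0 ≤ r) :
    algebraMap ℝ B (1 - e) ≤ expGroup L r * G * expGroup L r ∧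
      expGroup L r * G * expGroup L r ≤ algebraMap ℝ B ((1 + e) * Real.exp (2 * r * l)) := by
  have hLsa : IsSelfAdjoint L := .of_nonneg hL
  have e_nonneg : 0 ≤ e := (norm_nonneg _).trans h
  obtain ⟨le_G, G_le⟩ := algebraMap_le_and_le_of_norm_sub_one_le hG h
  have conj_algebraMap (k : ℝ) : (expGroup L r * algebraMap ℝ B k * expGroup L r : B) =
      k • (expGroup L ↑(2 * r) : B) := by
    rw [← Algebra.commutes, mul_assoc, ← Units.val_mul, ← expGroup_add, Algebra.smul_def]
    congr 3
    push_cast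
    ring
  have hconj := isSelfAdjoint_expGroup hLsa r
  constructor
  · calc algebraMap ℝ B (1 - e) = (1 - e) • 1 := Algebra.algebraMap_eq_smul_one _
      _ ≤ (1 - e) • (expGroup L ↑(2 * r) : B) := smul_le_smul_of_nonneg_left
        (one_le_expGroup hL (by positivity)) (sub_nonneg.2 he)
      _ ≤ expGroup L r * G * expGroup L r := by
        rw [← conj_algebraMap]
        exact hconj.conjugate_le_conjugate le_G
  · calc (expGroup L r * G * expGroup L r : B) ≤ (1 + e) • (expGroup L ↑(2 * r) : B) := by
          rw [← conj_algebraMap]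
          exact hconj.conjugate_le_conjugate G_le
      _ ≤ (1 + e) • algebraMap ℝ B (Real.exp (2 * r * l)) := smul_le_smul_of_nonneg_left
        (expGroup_le_algebraMap hLsa hl (by positivity)) (by positivity)
      _ = algebraMap ℝ B ((1 + e) * Real.exp (2 * r * l)) := by rw [Algebra.smul_def, ← map_mul]

theorem exists_smul_expGroup_bounds {t m : ℝ} (hL : 0 ≤ L) (hLt : L ≤ algebraMap ℝ B (t / 2))
    (hc : IsSelfAdjoint c) (hm : 2 * ‖L - c‖ < m) :
    ∃ s ∈ Set.Ioc (0 : ℝ) 1, ∃ r : ℝ,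
      1 ≤ r • (expGroup L 1 * expGroup c (-2 * s) * expGroup L 1 : B) ∧
      r • (expGroup L 1 * expGroup c (-2 * s) * expGroup L 1 : B) ≤
        algebraMap ℝ B (Real.exp (s * (3 * m) + (1 - s) * t)) := by
  have m_pos : 0 < m := (by positivity : 0 ≤ 2 * ‖L - c‖).trans_lt hm
  obtain ⟨s, norm_le, s_pos, s_le⟩ := (eventually_norm_expSandwich_sub_one_le L c hm |>.and
    (Ioc_mem_nhdsGT (show 0 < min 1 (1 / (2 * m)) by positivity))).exists
  have s_le_one : s ≤ 1 := s_le.trans (min_le_left _ _)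
  have sm_le : s * m ≤ 1 / 2 := by
    have := (le_div_iff₀ (by positivity)).1 (s_le.trans (min_le_right _ _))
    linarith
  have sm_pos : 0 < s * m := by positivity
  obtain ⟨lower, upper⟩ := expGroup_mul_mul_expGroup_bounds hL hLt
    (isSelfAdjoint_expSandwich (.of_nonneg hL) hc s) norm_le (by linarith) (sub_nonneg.2 s_le_one)
  simp only [← Units.val_mul, ← expGroup_one_mul_mul_expGroup_one] at lower upper
  refine ⟨s, ⟨s_pos, s_le_one⟩, Real.exp (2 * (s * m)), ?_, ?_⟩
  · calc (1 : B) = algebraMap ℝ B 1 := (map_one _).symm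
      _ ≤ algebraMap ℝ B (Real.exp (2 * (s * m)) * (1 - s * m)) := by
        refine algebraMap_mono B ?_
        nlinarith [Real.add_one_le_exp (2 * (s * m))]
      _ = Real.exp (2 * (s * m)) • algebraMap ℝ B (1 - s * m) := by
        rw [Algebra.smul_def, ← map_mul]
      _ ≤ _ := smul_le_smul_of_nonneg_left lower (Real.exp_pos _).le
  · calc Real.exp (2 * (s * m)) • (expGroup L 1 * expGroup c (-2 * s) * expGroup L 1 : B)
        ≤ Real.exp (2 * (s * m)) •
            algebraMap ℝ B ((1 + s * m) * Real.exp (2 * (1 - s) * (t / 2))) :=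
          smul_le_smul_of_nonneg_left upper (Real.exp_pos _).le
      _ = algebraMap ℝ B
            (Real.exp (2 * (s * m)) * (1 + s * m) * Real.exp (2 * (1 - s) * (t / 2))) := by
        rw [Algebra.smul_def, ← map_mul, ← mul_assoc (Real.exp _)]
      _ ≤ algebraMap ℝ B (Real.exp (2 * (s * m)) * Real.exp (s * m) *
            Real.exp (2 * (1 - s) * (t / 2))) := by
        refine algebraMap_mono B ?_
        gcongr
        linarith [Real.add_one_le_exp (s * m)]
      _ = algebraMap ℝ B (Real.exp (s * (3 * m) + (1 - s) * t)) := by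
        rw [← Real.exp_add, ← Real.exp_add]
        ring_nf

end CStarAlgebra

section ConjugateRepresentation

variable {A B : Type*} [NormedRing A] [NormedAlgebra ℂ A] [StarRing A] [NormedStarGroup A]
  [CStarAlgebra B] {ρ : A →ₐ[ℂ] B} {C : ℝ≥0} {L : B}

/-- The representation `a ↦ u * ρ a * u⁻¹`. -/
noncomputable def conjugateRepresentation {A B : Type*} [Semiring A] [Algebra ℂ A] [Ring B]
    [Algebra ℂ B] (ρ : A →ₐ[ℂ] B) (u : Bˣ) : A →ₐ[ℂ] B :=
  (MulSemiringAction.toAlgHom ℂ B (ConjAct.toConjAct u)).comp ρ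

lemma conjugateRepresentation_apply {A B : Type*} [Semiring A] [Algebra ℂ A] [Ring B]
    [Algebra ℂ B] (ρ : A →ₐ[ℂ] B) (u : Bˣ) (a : A) :
    conjugateRepresentation ρ u a = u * ρ a * ↑u⁻¹ := rfl

lemma norm_conjFlow_conjugateRepresentation_le (hC : ∀ a, ‖ρ a‖ ≤ C * ‖a‖)
    (hρ : IsSymmetrizer ρ (expGroup L 1 * expGroup L 1 : B)) (a : A) :
    ‖conjFlow L (conjugateRepresentation ρ (expGroup L 1) a) (-1)‖ ≤ C * ‖a‖ ∧
      ‖conjFlow L (conjugateRepresentation ρ (expGroup L 1) a) 1‖ ≤ C * ‖a‖ := by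
  rw [conjFlow, conjFlow, conjugateRepresentation_apply, neg_neg, expGroup_neg]
  constructor
  · simpa [mul_assoc] using hC a
  · simpa [← mul_assoc, hρ a] using hC (star a)

end ConjugateRepresentation

theorem TotalReductionProperty.exists_commute_conjugateRepresentation {A : Type u} [NormedRing A]
    [NormedAlgebra ℂ A] [StarRing A] [NormedStarGroup A]
    (htrp : TotalReductionProperty A) (C : ℝ≥0) :
    ∃ M : ℝ, ∀ (K : Type u) [NormedAddCommGroup K] [InnerProductSpace ℂ K] [CompleteSpace K]
      (ρ : A →ₐ[ℂ] (K →L[ℂ] K)), (∀ a, ‖ρ a‖ ≤ C * ‖a‖) → ∀ L : K →L[ℂ] K, IsSelfAdjoint L →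
      IsSymmetrizer ρ (expGroup L 1 * expGroup L 1 : K →L[ℂ] K) →
      ∃ c : K →L[ℂ] K, IsSelfAdjoint c ∧ ‖L - c‖ ≤ M ∧
        ∀ a, Commute c (expGroup L 1 * ρ a * ↑(expGroup L 1)⁻¹) := by
  obtain ⟨M, hM⟩ := htrp.exists_uniform_eq_commutator C
  refine ⟨M, fun K _ _ _ ρ hC L hL hρ => ?_⟩
  let π := conjugateRepresentation ρ (expGroup L 1)
  have π_star (a : A) : π (star a) = star (π a) :=
    IsSymmetrizer.mul_map_star_mul_inv (by simpa using isSelfAdjoint_expGroup hL 1) hρ a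
  have flow_le (a : A) := norm_conjFlow_conjugateRepresentation_le hC hρ a
  have norm_π_le (a : A) : ‖π a‖ ≤ C * ‖a‖ := by
    simpa only [conjFlow_zero] using
      norm_conjFlow_le hL (flow_le a).1 (flow_le a).2 (z := 0) (by simp)
  obtain ⟨T, norm_T_le, hT⟩ := hM K π
    ((LinearMap.mulLeft ℂ L - LinearMap.mulRight ℂ L) ∘ₗ π.toLinearMap) norm_π_le
    (fun a => norm_commutator_le hL (flow_le a).1 (flow_le a).2)
    (fun a b => by
      simp only [LinearMap.comp_apply, AlgHom.toLinearMap_apply, map_mul, LinearMap.sub_apply,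
        LinearMap.mulLeft_apply, LinearMap.mulRight_apply]
      noncomm_ring)
  have commute (a : A) : Commute (L - T) (π a) := by
    rw [Commute, SemiconjBy, sub_mul, mul_sub, sub_eq_sub_iff_sub_eq_sub]
    exact hT a
  have commute_star (a : A) : Commute (star (L - T)) (π a) := by
    simpa only [π_star, star_star] using (commute (star a)).star_star
  refine ⟨ℜ (L - T), (ℜ (L - T)).2, ?_, fun a => ?_⟩
  · have eq_smul : L - ℜ (L - T) = (2 : ℝ)⁻¹ • (T + star T) := by
      rw [realPart_apply_coe, star_sub, hL.star_eq]
      module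
    rw [eq_smul, norm_smul, Real.norm_of_nonneg (by positivity)]
    linarith [norm_add_le T (star T), norm_star T]
  · rw [realPart_apply_coe]
    exact ((commute a).add_left (commute_star a)).smul_left _

theorem TotalReductionProperty.exists_improved_symmetrizer {A : Type u} [NormedRing A]
    [NormedAlgebra ℂ A] [StarRing A] [NormedStarGroup A]
    (htrp : TotalReductionProperty A) (C : ℝ≥0) :
    ∃ M : ℝ, ∀ (K : Type u) [NormedAddCommGroup K] [InnerProductSpace ℂ K] [CompleteSpace K]
      (ρ : A →ₐ[ℂ] (K →L[ℂ] K)), (∀ a, ‖ρ a‖ ≤ C * ‖a‖) → ∀ (T : K →L[ℂ] K) (t : ℝ), 1 ≤ T →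
      T ≤ algebraMap ℝ _ (Real.exp t) → IsSymmetrizer ρ T →
      ∃ s ∈ Set.Ioc (0 : ℝ) 1, ∃ T' : K →L[ℂ] K, 1 ≤ T' ∧
        T' ≤ algebraMap ℝ _ (Real.exp (s * M + (1 - s) * t)) ∧ IsSymmetrizer ρ T' := by
  obtain ⟨M, hM⟩ := htrp.exists_commute_conjugateRepresentation C
  refine ⟨3 * (2 * M + 1), fun K _ _ _ ρ hC T t one_le_T T_le hT => ?_⟩
  obtain ⟨L, L_nonneg, L_le, rfl⟩ := exists_expGroup_mul_self_eq one_le_T T_le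
  obtain ⟨c, hc, norm_le, commute⟩ := hM K ρ hC L (.of_nonneg L_nonneg) hT
  obtain ⟨s, hs, r, one_le, le_exp⟩ := exists_smul_expGroup_bounds L_nonneg L_le hc
    (m := 2 * M + 1) (by linarith)
  refine ⟨s, hs, _, one_le, le_exp, IsSymmetrizer.smul (hT.mul_commute_mul fun a => ?_) r⟩
  exact ((commute a).smul_left _).exp_left

end Improvement

section UniformBound

open Filter Topology

variable {H : Type*} [NormedAddCommGroup H] [InnerProductSpace ℂ H] [CompleteSpace H]

lemma exists_forall_tendsto_inner {ι : Type*} (U : Ultrafilter ι) {T : ι → H →L[ℂ] H} {D : ℝ}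
    (hT : ∀ᶠ i in U, ‖T i‖ ≤ D) :
    ∃ S : H →L[ℂ] H, ∀ x y, Tendsto (fun i => ⟪T i x, y⟫_ℂ) U (𝓝 ⟪S x, y⟫_ℂ) := by
  have exists_limit (x y : H) :
      ∃ l : ℂ, ‖l‖ ≤ D * ‖x‖ * ‖y‖ ∧ Tendsto (fun i => ⟪T i x, y⟫_ℂ) U (𝓝 l) := by
    have mem_ball : ∀ᶠ i in U, ⟪T i x, y⟫_ℂ ∈ Metric.closedBall (0 : ℂ) (D * ‖x‖ * ‖y‖) := by
      filter_upwards [hT] with i hi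
      rw [mem_closedBall_zero_iff]
      refine (norm_inner_le_norm _ _).trans ?_
      gcongr
      exact (T i).le_of_opNorm_le hi x
    obtain ⟨l, hl, tendsto_l⟩ := (isCompact_closedBall (0 : ℂ) _).ultrafilter_le_nhds
      (U.map fun i => ⟪T i x, y⟫_ℂ) (le_principal_iff.2 mem_ball)
    exact ⟨l, mem_closedBall_zero_iff.1 hl, tendsto_l⟩
  choose b norm_b_le tendsto_b using exists_limit
  let form : H →ₗ⋆[ℂ] H →ₗ[ℂ] ℂ := LinearMap.mk₂'ₛₗ _ _ b
    (fun x x' y => tendsto_nhds_unique (tendsto_b _ _) <| by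
      simpa [inner_add_left] using (tendsto_b x y).add (tendsto_b x' y))
    (fun c x y => tendsto_nhds_unique (tendsto_b _ _) <| by
      simpa [inner_smul_left, mul_comm] using (tendsto_b x y).const_mul (starRingEnd ℂ c))
    (fun x y y' => tendsto_nhds_unique (tendsto_b _ _) <| by
      simpa [inner_add_right] using (tendsto_b x y).add (tendsto_b x y'))
    (fun c x y => tendsto_nhds_unique (tendsto_b _ _) <| by
      simpa [inner_smul_right] using (tendsto_b x y).const_mul c)
  refine ⟨InnerProductSpace.continuousLinearMapOfBilin (form.mkContinuous₂ D norm_b_le),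
    fun x y => ?_⟩
  rw [InnerProductSpace.continuousLinearMapOfBilin_apply]
  exact tendsto_b x y

section SymmetrizerBounds

variable {A : Type*} [Semiring A] [Algebra ℂ A] [Star A]

/-- The exponents `t ≥ 0` such that `ρ` is symmetrized by some `T` with `1 ≤ T ≤ exp t`. -/
def symmetrizerBounds (ρ : A →ₐ[ℂ] (H →L[ℂ] H)) : Set ℝ :=
  {t | 0 ≤ t ∧ ∃ T, 1 ≤ T ∧ T ≤ algebraMap ℝ _ (Real.exp t) ∧ IsSymmetrizer ρ T}

variable {ρ : A →ₐ[ℂ] (H →L[ℂ] H)}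

lemma IsUnitarizable.symmetrizerBounds_nonempty (h : IsUnitarizable ρ) :
    (symmetrizerBounds ρ).Nonempty := by
  obtain ⟨T, one_le, hT⟩ := h
  refine ⟨‖T‖, norm_nonneg T, T, one_le, ?_, hT⟩
  rw [← CStarAlgebra.norm_le_iff_le_algebraMap T (Real.exp_nonneg _) (zero_le_one.trans one_le)]
  linarith [Real.add_one_le_exp ‖T‖]

lemma isClosed_symmetrizerBounds : IsClosed (symmetrizerBounds ρ) := by
  refine isClosed_iff_ultrafilter.2 fun t U U_le mem_U => ?_
  choose! T one_le T_le hT using fun s (hs : s ∈ symmetrizerBounds ρ) => hs.2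
  have norm_le : ∀ᶠ s in U, ‖T s‖ ≤ Real.exp (t + 1) := by
    filter_upwards [mem_U, U_le (Iio_mem_nhds (lt_add_one t))] with s hs lt
    exact (CStarAlgebra.norm_le_iff_le_algebraMap _ (Real.exp_nonneg _)
      (zero_le_one.trans (one_le s hs))).2 (T_le s hs) |>.trans (Real.exp_le_exp.2 (le_of_lt lt))
  obtain ⟨S, tendsto_S⟩ := exists_forall_tendsto_inner U norm_le
  refine ⟨ge_of_tendsto U_le (mem_of_superset mem_U fun s hs => hs.1), S,
    le_iff_forall_inner_le.2 fun x => ?_, le_iff_forall_inner_le.2 fun x => ?_,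
    isSymmetrizer_iff_inner.2 fun a x y => ?_⟩
  · refine ge_of_tendsto (tendsto_S x x) ?_
    filter_upwards [mem_U] with s hs using le_iff_forall_inner_le.1 (one_le s hs) x
  · have tendsto_exp : Tendsto (fun s => ⟪algebraMap ℝ (H →L[ℂ] H) (Real.exp s) x, x⟫_ℂ) U
        (𝓝 ⟪algebraMap ℝ (H →L[ℂ] H) (Real.exp t) x, x⟫_ℂ) :=
      ((by fun_prop : Continuous fun s : ℝ =>
        ⟪algebraMap ℝ (H →L[ℂ] H) (Real.exp s) x, x⟫_ℂ).tendsto t).mono_left U_le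
    refine le_of_tendsto_of_tendsto (tendsto_S x x) tendsto_exp ?_
    filter_upwards [mem_U] with s hs using le_iff_forall_inner_le.1 (T_le s hs) x
  · refine tendsto_nhds_unique ((tendsto_S _ y).congr' ?_) (tendsto_S x _)
    filter_upwards [mem_U] with s hs using isSymmetrizer_iff_inner.1 (hT s hs) a x y

end SymmetrizerBounds

theorem TotalReductionProperty.exists_uniform_symmetrizer {A : Type u} [NormedRing A]
    [NormedAlgebra ℂ A] [StarRing A] [NormedStarGroup A] (htrp : TotalReductionProperty A)
    (C : ℝ≥0) :
    ∃ D : ℝ, ∀ (K : Type u) [NormedAddCommGroup K] [InnerProductSpace ℂ K] [CompleteSpace K]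
      (ρ : A →ₐ[ℂ] (K →L[ℂ] K)), (∀ a, ‖ρ a‖ ≤ C * ‖a‖) → IsUnitarizable ρ →
      ∃ T, 1 ≤ T ∧ ‖T‖ ≤ D ∧ IsSymmetrizer ρ T := by
  obtain ⟨M, hM⟩ := htrp.exists_improved_symmetrizer C
  refine ⟨Real.exp (max M 0), fun K _ _ _ ρ hC hρ => ?_⟩
  have least := isClosed_symmetrizerBounds.isLeast_csInf hρ.symmetrizerBounds_nonempty
    ⟨0, fun _ h => h.1⟩
  set t := sInf (symmetrizerBounds ρ)
  obtain ⟨⟨t_nonneg, T, one_le, T_le, hT⟩, t_le⟩ := least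
  have t_le_max : t ≤ max M 0 := by
    obtain ⟨s, ⟨s_pos, s_le_one⟩, T', one_le', T'_le, hT'⟩ := hM K ρ hC T t one_le T_le hT
    have exp_le : s * M + (1 - s) * t ≤ s * max M 0 + (1 - s) * t := by
      gcongr
      exact le_max_left M 0
    have nonneg : 0 ≤ s * max M 0 + (1 - s) * t :=
      add_nonneg (by positivity) (mul_nonneg (sub_nonneg.2 s_le_one) t_nonneg)
    have improved := t_le ⟨nonneg, T', one_le',
      T'_le.trans (algebraMap_mono _ (Real.exp_le_exp.2 exp_le)), hT'⟩
    nlinarith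
  refine ⟨T, one_le, ?_, hT⟩
  exact ((CStarAlgebra.norm_le_iff_le_algebraMap T (Real.exp_nonneg t)
    (zero_le_one.trans one_le)).2 T_le).trans (Real.exp_le_exp.2 t_le_max)

end UniformBound

section Exhaustion

open Filter Topology

variable {H : Type*} [NormedAddCommGroup H] [InnerProductSpace ℂ H]

section Restriction

variable {A : Type*} [Semiring A] [Algebra ℂ A] [Star A]

/-- `θ` restricts to a unitarizable representation on the invariant subspace `V`, which is required
to be complete so that adjoints of operators on `V` make sense. -/
def IsUnitarizableOn (θ : A →ₐ[ℂ] (H →L[ℂ] H)) (V : Submodule ℂ H) : Prop :=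
  ∃ (_ : CompleteSpace V) (hV : ∀ a, ∀ x ∈ V, θ a x ∈ V),
    IsUnitarizable (subrepresentation θ V hV)

variable {θ : A →ₐ[ℂ] (H →L[ℂ] H)}

lemma isUnitarizableOn_bot : IsUnitarizableOn θ ⊥ :=
  ⟨inferInstance, fun a x hx => by simp [(Submodule.mem_bot ℂ).1 hx], 1, le_rfl,
    fun a => Subsingleton.elim _ _⟩

lemma exists_extension_of_isSymmetrizer_subrepresentation {V : Submodule ℂ H} [CompleteSpace V]
    (hV : ∀ a, ∀ x ∈ V, θ a x ∈ V) {T : V →L[ℂ] V} (one_le : 1 ≤ T)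
    (hT : IsSymmetrizer (subrepresentation θ V hV) T) :
    ∃ S : H →L[ℂ] H, ‖S‖ ≤ ‖T‖ ∧ (∀ x ∈ V, ⟪x, x⟫_ℂ ≤ ⟪S x, x⟫_ℂ) ∧
      ∀ a, ∀ x ∈ V, ∀ y ∈ V, ⟪S (θ a x), y⟫_ℂ = ⟪S x, θ (star a) y⟫_ℂ := by
  let S : H →L[ℂ] H := V.subtypeL ∘L T ∘L V.orthogonalProjectionOnto
  have S_coe (x : V) : S x = T x := by simp [S]
  refine ⟨S, ContinuousLinearMap.opNorm_le_bound _ (norm_nonneg T) fun x => ?_,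
    fun x hx => ?_, fun a x hx y hy => ?_⟩
  · exact (T.le_opNorm _).trans (by gcongr; exact V.norm_orthogonalProjectionOnto_apply_le x)
  · lift x to V using hx
    rw [S_coe]
    exact le_iff_forall_inner_le.1 one_le x
  · lift x to V using hx
    lift y to V using hy
    rw [← coe_subrepresentation_apply θ V hV, S_coe, S_coe,
      ← coe_subrepresentation_apply θ V hV (star a)]
    exact isSymmetrizer_iff_inner.1 hT a x y

lemma IsUnitarizableOn.isClosed {V : Submodule ℂ H} (hV : IsUnitarizableOn θ V) :
    IsClosed (V : Set H) :=
  (completeSpace_coe_iff_isComplete.1 hV.1).isClosed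

lemma IsUnitarizableOn.map_mem {V : Submodule ℂ H} (hV : IsUnitarizableOn θ V) :
    ∀ a, ∀ x ∈ V, θ a x ∈ V :=
  hV.2.1

variable [CompleteSpace H]

lemma IsUnitarizableOn.comap_one_sub {V W : Submodule ℂ H} (hV : IsUnitarizableOn θ V)
    (hW : IsUnitarizableOn θ W) {Q : H →L[ℂ] H} (Q_mem : ∀ x, Q x ∈ V)
    (hQ : ∀ a x, Q (θ a x) = θ a (Q x)) :
    IsUnitarizableOn θ (W.comap (1 - Q : H →L[ℂ] H).toLinearMap) := by
  have isClosed_W := hW.isClosed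
  obtain ⟨_, hθV, hV⟩ := hV
  obtain ⟨_, hθW, hW⟩ := hW
  let U := W.comap (1 - Q : H →L[ℂ] H).toLinearMap
  have isClosed_U : IsClosed (U : Set H) :=
    isClosed_W.preimage (1 - Q : H →L[ℂ] H).continuous
  have map_one_sub (a : A) (x : H) : (1 - Q) (θ a x) = θ a ((1 - Q) x) := by simp [hQ]
  have hθU (a : A) : ∀ x ∈ U, θ a x ∈ U := fun x hx => by
    change (1 - Q) (θ a x) ∈ W
    rw [map_one_sub]
    exact hθW a _ hx
  have : CompleteSpace U := isClosed_U.completeSpace_coe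
  refine ⟨this, hθU, isUnitarizable_of_intertwines hV hW
    ((Q ∘L U.subtypeL).codRestrict V fun x => Q_mem x)
    (((1 - Q : H →L[ℂ] H) ∘L U.subtypeL).codRestrict W fun x => x.2)
    (fun a x => Subtype.ext (hQ a x)) (fun a x => Subtype.ext (map_one_sub a x))
    zero_le_two fun x => ?_⟩
  calc ‖(x : H)‖ ^ 2 = ‖Q x + (1 - Q) (x : H)‖ ^ 2 := by simp
    _ ≤ (‖Q x‖ + ‖(1 - Q) (x : H)‖) ^ 2 := by gcongr; exact norm_add_le _ _
    _ ≤ 2 * (‖Q x‖ ^ 2 + ‖(1 - Q) (x : H)‖ ^ 2) := add_sq_le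

lemma isUnitarizable_of_forall_finset {D : ℝ}
    (h : ∀ F : Finset H, ∃ T : H →L[ℂ] H, ‖T‖ ≤ D ∧ ∃ V : Submodule ℂ H, (F : Set H) ⊆ V ∧
      (∀ x ∈ V, ⟪x, x⟫_ℂ ≤ ⟪T x, x⟫_ℂ) ∧
      ∀ a, ∀ x ∈ V, ∀ y ∈ V, ⟪T (θ a x), y⟫_ℂ = ⟪T x, θ (star a) y⟫_ℂ) :
    IsUnitarizable θ := by
  choose T norm_T_le V subset_V one_le hT using h
  let U : Ultrafilter (Finset H) := .of atTop
  have eventually_mem (x : H) : ∀ᶠ F in U, x ∈ V F := by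
    refine Ultrafilter.of_le _ ?_
    filter_upwards [eventually_ge_atTop {x}] with F hF
    exact subset_V F (Finset.singleton_subset_iff.1 hF)
  obtain ⟨S, tendsto_S⟩ := exists_forall_tendsto_inner U (.of_forall norm_T_le)
  refine ⟨S, le_iff_forall_inner_le.2 fun x => ge_of_tendsto (tendsto_S x x) ?_,
    isSymmetrizer_iff_inner.2 fun a x y =>
      tendsto_nhds_unique ((tendsto_S _ y).congr' ?_) (tendsto_S x _)⟩
  · filter_upwards [eventually_mem x] with F hF using one_le F x hF
  · filter_upwards [eventually_mem x, eventually_mem y] with F hx hy using hT F a x hx y hy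

end Restriction

variable {A : Type u} [CStarAlgebra A] [PartialOrder A] [StarOrderedRing A]
  {H : Type u} [NormedAddCommGroup H] [InnerProductSpace ℂ H] [CompleteSpace H]
  {θ : A →ₐ[ℂ] (H →L[ℂ] H)}

theorem TotalReductionProperty.exists_isUnitarizableOn_of_finset (htrp : TotalReductionProperty A)
    (hθ : Continuous θ) {C : ℝ≥0} (hC : ∀ a, ‖θ a‖ ≤ C * ‖a‖) (F : Finset H) :
    ∃ V : Submodule ℂ H, (F : Set H) ⊆ V ∧ IsUnitarizableOn θ V := by
  classical
  induction F using Finset.induction_on with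
  | empty => exact ⟨⊥, by simp, isUnitarizableOn_bot⟩
  | insert w F _ ih =>
    obtain ⟨V, F_subset, hV⟩ := ih
    obtain ⟨Q, Q_mem, Q_eq, hQ⟩ := htrp.exists_projection hθ hV.isClosed hV.map_mem
    refine ⟨_, Set.insert_subset_iff.2 ⟨?_, fun x hx => ?_⟩ |> (Finset.coe_insert w F).trans_subset,
      hV.comap_one_sub ⟨inferInstance, _, isUnitarizable_cyclicRepresentation hC (w - Q w)⟩
        Q_mem hQ⟩
    · exact mem_cyclicSubspace_self θ (w - Q w)
    · simp [Q_eq x (F_subset hx)]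

theorem TotalReductionProperty.isUnitarizable (htrp : TotalReductionProperty A)
    (hθ : Continuous θ) : IsUnitarizable θ := by
  let θL : A →L[ℂ] (H →L[ℂ] H) := ⟨θ.toLinearMap, hθ⟩
  have norm_θ_le (a : A) : ‖θ a‖ ≤ ‖θL‖₊ * ‖a‖ := θL.le_opNorm a
  obtain ⟨D, hD⟩ := htrp.exists_uniform_symmetrizer ‖θL‖₊
  refine isUnitarizable_of_forall_finset (D := D) fun F => ?_
  obtain ⟨V, F_subset, _, hθV, hV⟩ := htrp.exists_isUnitarizableOn_of_finset hθ norm_θ_le F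
  obtain ⟨T, one_le, norm_T_le, hT⟩ := hD V (subrepresentation θ V hθV)
    (fun a => (norm_subrepresentation_le θ V hθV a).trans (norm_θ_le a)) hV
  obtain ⟨S, norm_S_le, hS⟩ := exists_extension_of_isSymmetrizer_subrepresentation hθV one_le hT
  exact ⟨S, norm_S_le.trans norm_T_le, V, F_subset, hS⟩

end Exhaustion

/-- a C*-algebra with the total reduction property has the similarity
property: every continuous representation on a Hilbert space is similar to a
*-representation. -/
theorem cstar_totalReduction_implies_similarity
    {A : Type u} [NormedRing A] [StarRing A] [CStarRing A] [NormedAlgebra ℂ A]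
    [CompleteSpace A] [StarModule ℂ A]
    (htrp : ∀ (K : Type u) [NormedAddCommGroup K] [InnerProductSpace ℂ K] [CompleteSpace K],
      ∀ θ : A →ₐ[ℂ] (K →L[ℂ] K), Continuous (⇑θ) →
      ∀ V : Submodule ℂ K, IsClosed (V : Set K) → (∀ a : A, ∀ x ∈ V, θ a x ∈ V) →
      ∃ W : Submodule ℂ K, IsClosed (W : Set K) ∧ (∀ a : A, ∀ x ∈ W, θ a x ∈ W) ∧
        V ⊓ W = ⊥ ∧ V ⊔ W = ⊤)
    {H : Type u} [NormedAddCommGroup H] [InnerProductSpace ℂ H] [CompleteSpace H]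
    (θ : A →ₐ[ℂ] (H →L[ℂ] H)) (hθ : Continuous (⇑θ)) :
    ∃ S : (H →L[ℂ] H)ˣ, ∀ a : A,
      (S : H →L[ℂ] H) * θ (star a) * ((S⁻¹ : (H →L[ℂ] H)ˣ) : H →L[ℂ] H)
        = star ((S : H →L[ℂ] H) * θ a * ((S⁻¹ : (H →L[ℂ] H)ˣ) : H →L[ℂ] H)) := by
  let _ : CStarAlgebra A := { }
  let _ := CStarAlgebra.spectralOrder A
  have := CStarAlgebra.spectralOrderedRing A
  obtain ⟨T, one_le, hT⟩ := TotalReductionProperty.isUnitarizable htrp hθ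
  obtain ⟨S, hS, rfl⟩ := exists_isSelfAdjoint_unit_mul_self_eq (isStrictlyPositive_one.of_le one_le)
  exact ⟨S, hT.mul_map_star_mul_inv hS⟩
end

section
/- Let A ⊆ B(H) be an operator algebra with the complete reduction property. If a closed A-submodule V ⊆ H is uniquely complemented in the lattice of closed A-submodules by W, then the projection onto V along W lies in the center of A'' (it commutes with both A′ and A''). -/
/-!
Let `p` be the projection onto `V` along `W`, and let `T` commute with `A`.

If `p T (1 - p) ≠ 0`, then `ker (p + p T (1 - p))` is a closed invariant complement of `V` other
than `W`; so uniqueness says that there is no non-zero module map from `W` to `V`.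

To exclude module maps `s = (1 - p) T p` from `V` to `W` as well, put the graphs of
`cⁿ s`, with `1 < ‖c‖`, next to each other in a single closed invariant subspace of `ℓ^q(ℕ, E)`.
The diagonal blocks of a projection onto it commuting with `A` are projections onto the individual
graphs, with norms bounded independently of `n`. As nothing maps `W` to `V`, the `n`-th block must
vanish on `W`, hence is equal to `p + cⁿ s`; boundedness in `n` forces `s = 0`.
-/

open Set
open scoped ENNReal

section Submodules

variable {𝕜 E : Type*} [NontriviallyNormedField 𝕜] [NormedAddCommGroup E] [NormedSpace 𝕜 E]

/-- `V` is a closed submodule of `E` over the set of operators `A`, that is, a closed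
`A`-invariant subspace. -/
structure IsClosedInvariant (A : Set (E →L[𝕜] E)) (V : Submodule 𝕜 E) : Prop where
  isClosed : IsClosed (V : Set E)
  mapsTo : ∀ a ∈ A, MapsTo a V V

/-- The reduction property of a set of operators `A`: every closed `A`-invariant subspace has a
closed `A`-invariant complement. -/
def HasReductionProperty (A : Set (E →L[𝕜] E)) : Prop :=
  ∀ V, IsClosedInvariant A V → ∃ W, IsClosedInvariant A W ∧ IsCompl V W

variable {A : Set (E →L[𝕜] E)} {V W : Submodule 𝕜 E} {p T : E →L[𝕜] E}

theorem IsClosedInvariant.ker (hT : T ∈ Subalgebra.centralizer 𝕜 A) :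
    IsClosedInvariant A T.ker where
  isClosed := T.isClosed_ker
  mapsTo a ha x hx :=
    calc T (a x) = a (T x) := (DFunLike.congr_fun (hT a ha) x).symm
      _ = 0 := (congrArg a hx).trans (map_zero a)

theorem IsClosedInvariant.range (hp : IsIdempotentElem p)
    (hpA : p ∈ Subalgebra.centralizer 𝕜 A) : IsClosedInvariant A p.range := by
  have hrange : p.range = (1 - p).ker :=
    LinearMap.IsIdempotentElem.range_eq_ker (ContinuousLinearMap.IsIdempotentElem.toLinearMap hp)
  exact hrange ▸ .ker (sub_mem (one_mem _) hpA)

theorem projectionL_mem_centralizer (hVW : V.IsTopCompl W) (hV : ∀ a ∈ A, MapsTo a V V)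
    (hW : ∀ a ∈ A, MapsTo a W W) : V.projectionL W hVW ∈ Subalgebra.centralizer 𝕜 A := by
  refine fun a ha ↦ Commute.symm <| (ContinuousLinearMap.IsIdempotentElem.commute_iff
    (Submodule.isIdempotentElem_projectionL hVW)).2 ⟨?_, ?_⟩
  · rw [Submodule.range_projectionL]
    exact hV a ha
  · rw [Submodule.ker_projectionL]
    exact hW a ha

theorem HasReductionProperty.exists_isProj [CompleteSpace E] (hA : HasReductionProperty A)
    (hV : IsClosedInvariant A V) :
    ∃ Q ∈ Subalgebra.centralizer 𝕜 A, LinearMap.IsProj V Q := by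
  obtain ⟨W, hW, hVW⟩ := hA V hV
  have hVW := Submodule.IsCompl.isTopCompl_of_isClosed hVW hV.isClosed hW.isClosed
  exact ⟨V.projectionL W hVW, projectionL_mem_centralizer hVW hV.mapsTo hW.mapsTo,
    Submodule.projectionL_apply_mem hVW, fun x hx ↦ Submodule.projectionL_apply_left hVW ⟨x, hx⟩⟩

theorem eq_projectionL (hVW : V.IsTopCompl W) (hfix : ∀ x ∈ V, p x = x)
    (hker : ∀ x ∈ W, p x = 0) : p = V.projectionL W hVW :=
  ContinuousLinearMap.coe_injective <| LinearMap.ext_on_codisjoint hVW.isCompl.codisjoint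
    (fun x hx ↦ (hfix x hx).trans (Submodule.projectionL_apply_left hVW ⟨x, hx⟩).symm)
    (fun x hx ↦ (hker x hx).trans (Submodule.projectionL_apply_right hVW ⟨x, hx⟩).symm)

end Submodules

section DiagonalAction

variable {𝕜 E : Type*} [NontriviallyNormedField 𝕜] [NormedAddCommGroup E] [NormedSpace 𝕜 E]
  {ι : Type*} {q : ℝ≥0∞} [Fact (1 ≤ q)] {A : Set (E →L[𝕜] E)}

variable (ι q) in
/-- The diagonal operator `(ξ i) ↦ (a (ξ i))` on `ℓ^q(ι, E)`. For a Hilbert space `E` and `q = 2`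
this is `a ⊗ 1` on `E ⊗ ℓ²(ι)`, so that the complete reduction property of `A` is
`HasReductionProperty (lpDiag ℕ 2 '' A)`. -/
noncomputable def lpDiag (a : E →L[𝕜] E) : lp (fun _ : ι ↦ E) q →L[𝕜] lp (fun _ : ι ↦ E) q :=
  lp.mapCLM q (fun _ ↦ a) (norm_nonneg a) fun _ ↦ le_rfl

theorem lpDiag_apply (a : E →L[𝕜] E) (ξ : lp (fun _ : ι ↦ E) q) (i : ι) :
    lpDiag ι q a ξ i = a (ξ i) :=
  rfl

theorem isClosedInvariant_lpDiag_iff {V : Submodule 𝕜 (lp (fun _ : ι ↦ E) q)} :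
    IsClosedInvariant (lpDiag ι q '' A) V ↔ IsClosed (V : Set (lp (fun _ : ι ↦ E) q)) ∧
      ∀ a ∈ A, ∀ ξ ∈ V, ∀ η : lp (fun _ : ι ↦ E) q, (∀ i, η i = a (ξ i)) → η ∈ V := by
  constructor
  · rintro ⟨hclosed, hmaps⟩
    refine ⟨hclosed, fun a ha ξ hξ η hη ↦ ?_⟩
    obtain rfl : η = lpDiag ι q a ξ := lp.ext (funext hη)
    exact hmaps _ (mem_image_of_mem _ ha) hξ
  · rintro ⟨hclosed, hmaps⟩
    exact ⟨hclosed, forall_mem_image.2 fun a ha ξ hξ ↦ hmaps a ha ξ hξ _ (lpDiag_apply a ξ)⟩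

theorem hasReductionProperty_lpDiag_iff :
    HasReductionProperty (lpDiag ι q '' A) ↔
      ∀ V : Submodule 𝕜 (lp (fun _ : ι ↦ E) q), IsClosed (V : Set (lp (fun _ : ι ↦ E) q)) →
        (∀ a ∈ A, ∀ ξ ∈ V, ∀ η : lp (fun _ : ι ↦ E) q, (∀ i, η i = a (ξ i)) → η ∈ V) →
        ∃ W : Submodule 𝕜 (lp (fun _ : ι ↦ E) q), IsClosed (W : Set (lp (fun _ : ι ↦ E) q)) ∧
          (∀ a ∈ A, ∀ ξ ∈ W, ∀ η : lp (fun _ : ι ↦ E) q, (∀ i, η i = a (ξ i)) → η ∈ W) ∧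
          V ⊓ W = ⊥ ∧ V ⊔ W = ⊤ := by
  simp only [HasReductionProperty, isClosedInvariant_lpDiag_iff, isCompl_iff, disjoint_iff,
    codisjoint_iff, and_imp, and_assoc]

variable (q) in
/-- The `ℓ^q`-direct sum of the subspaces `V i`, as a subspace of `ℓ^q(ι, E)`. -/
noncomputable def lpPiSubmodule (V : ι → Submodule 𝕜 E) : Submodule 𝕜 (lp (fun _ : ι ↦ E) q) :=
  ⨅ i, (V i).comap (lp.evalCLM 𝕜 (fun _ : ι ↦ E) q i).toLinearMap

theorem mem_lpPiSubmodule {V : ι → Submodule 𝕜 E} {ξ : lp (fun _ : ι ↦ E) q} :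
    ξ ∈ lpPiSubmodule q V ↔ ∀ i, ξ i ∈ V i :=
  Submodule.mem_iInf _

theorem IsClosedInvariant.lpPiSubmodule {V : ι → Submodule 𝕜 E}
    (hV : ∀ i, IsClosedInvariant A (V i)) :
    IsClosedInvariant (lpDiag ι q '' A) (lpPiSubmodule q V) where
  isClosed := by
    rw [_root_.lpPiSubmodule, Submodule.coe_iInf]
    exact isClosed_iInter fun i ↦
      (hV i).isClosed.preimage (lp.evalCLM 𝕜 (fun _ : ι ↦ E) q i).continuous
  mapsTo := forall_mem_image.2 fun a ha _ hξ ↦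
    mem_lpPiSubmodule.2 fun i ↦ (hV i).mapsTo a ha (mem_lpPiSubmodule.1 hξ i)

section Block

variable [DecidableEq ι]

/-- The `i`-th diagonal block of an operator on `ℓ^q(ι, E)`. -/
noncomputable def lpBlock (i : ι) (Q : lp (fun _ : ι ↦ E) q →L[𝕜] lp (fun _ : ι ↦ E) q) :
    E →L[𝕜] E :=
  lp.evalCLM 𝕜 (fun _ : ι ↦ E) q i ∘L Q ∘L lp.singleContinuousLinearMap 𝕜 (fun _ : ι ↦ E) q i

variable {Q : lp (fun _ : ι ↦ E) q →L[𝕜] lp (fun _ : ι ↦ E) q}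

theorem lpBlock_apply (i : ι) (x : E) : lpBlock i Q x = Q (lp.single q i x) i :=
  rfl

theorem norm_lpBlock_le (i : ι) : ‖lpBlock i Q‖ ≤ ‖Q‖ := by
  have hq : 0 < q := zero_lt_one.trans_le Fact.out
  refine ContinuousLinearMap.opNorm_le_bound _ (norm_nonneg Q) fun x ↦ ?_
  calc ‖Q (lp.single q i x) i‖
      ≤ ‖Q (lp.single q i x)‖ := lp.norm_apply_le_norm hq.ne' _ i
    _ ≤ ‖Q‖ * ‖lp.single (E := fun _ : ι ↦ E) q i x‖ := Q.le_opNorm _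
    _ = ‖Q‖ * ‖x‖ := by rw [lp.norm_single hq]

theorem lpDiag_single (a : E →L[𝕜] E) (i : ι) (x : E) :
    lpDiag ι q a (lp.single q i x) = lp.single q i (a x) :=
  lp.ext <| funext fun j ↦ Pi.apply_single (fun _ ↦ a) (fun _ ↦ map_zero a) i x j

theorem lpBlock_mem_centralizer (hQ : Q ∈ Subalgebra.centralizer 𝕜 (lpDiag ι q '' A)) (i : ι) :
    lpBlock i Q ∈ Subalgebra.centralizer 𝕜 A := by
  refine fun a ha ↦ ContinuousLinearMap.ext fun x ↦ ?_
  have hQa : lpDiag ι q a (Q (lp.single q i x)) = Q (lpDiag ι q a (lp.single q i x)) :=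
    DFunLike.congr_fun (hQ _ (mem_image_of_mem _ ha)) _
  calc a (Q (lp.single q i x) i)
      = lpDiag ι q a (Q (lp.single q i x)) i := rfl
    _ = Q (lp.single q i (a x)) i := by rw [hQa, lpDiag_single]

theorem isProj_lpBlock {V : ι → Submodule 𝕜 E} (hQ : LinearMap.IsProj (lpPiSubmodule q V) Q)
    (i : ι) : LinearMap.IsProj (V i) (lpBlock i Q) where
  map_mem x := mem_lpPiSubmodule.1 (hQ.map_mem (lp.single q i x)) i
  map_id x hx := by
    have hsingle : lp.single q i x ∈ lpPiSubmodule q V := by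
      refine mem_lpPiSubmodule.2 fun j ↦ ?_
      obtain rfl | hj := eq_or_ne j i
      · rwa [lp.single_apply_self]
      · rw [lp.single_apply_ne _ _ _ hj]
        exact zero_mem _
    rw [lpBlock_apply, hQ.map_id _ hsingle, lp.single_apply_self]

end Block

theorem HasReductionProperty.exists_bounded_isProj [CompleteSpace E]
    (hA : HasReductionProperty (lpDiag ι q '' A)) {V : ι → Submodule 𝕜 E}
    (hV : ∀ i, IsClosedInvariant A (V i)) :
    ∃ (C : ℝ) (P : ι → E →L[𝕜] E), ∀ i,
      P i ∈ Subalgebra.centralizer 𝕜 A ∧ LinearMap.IsProj (V i) (P i) ∧ ‖P i‖ ≤ C := by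
  classical
  obtain ⟨Q, hQA, hQ⟩ := hA.exists_isProj (.lpPiSubmodule hV)
  exact ⟨‖Q‖, fun i ↦ lpBlock i Q, fun i ↦
    ⟨lpBlock_mem_centralizer hQA i, isProj_lpBlock hQ i, norm_lpBlock_le i⟩⟩

end DiagonalAction

section Intertwining

variable {𝕜 E : Type*} [NontriviallyNormedField 𝕜] [NormedAddCommGroup E] [NormedSpace 𝕜 E]
  {A : Set (E →L[𝕜] E)} {p T : E →L[𝕜] E}

theorem mul_mul_eq_mul_of_unique_complement (hp : IsIdempotentElem p)
    (hpA : p ∈ Subalgebra.centralizer 𝕜 A)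
    (huniq : ∀ W, IsClosedInvariant A W → IsCompl p.range W → W = p.ker)
    (hT : T ∈ Subalgebra.centralizer 𝕜 A) : p * T * p = p * T := by
  set e := p + (p * T - p * T * p) with he_def
  have heA : e ∈ Subalgebra.centralizer 𝕜 A :=
    add_mem hpA (sub_mem (mul_mem hpA hT) (mul_mem (mul_mem hpA hT) hpA))
  have hpe : p * e = e := by
    simp only [he_def, mul_add, mul_sub, ← mul_assoc, hp.eq]
  have hep : e * p = p := by
    simp only [he_def, add_mul, sub_mul, hp.mul_mul_self, hp.eq, sub_self, add_zero]
  have he : IsIdempotentElem e := by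
    calc e * e = e * p * e := by rw [mul_assoc, hpe]
      _ = e := by rw [hep, hpe]
  have hrange : e.range = p.range := le_antisymm
    (hpe ▸ LinearMap.range_comp_le_range e.toLinearMap p.toLinearMap)
    (hep ▸ LinearMap.range_comp_le_range p.toLinearMap e.toLinearMap)
  have hker : e.ker = p.ker :=
    huniq _ (.ker heA) (hrange ▸ LinearMap.IsIdempotentElem.isCompl
      (ContinuousLinearMap.IsIdempotentElem.toLinearMap he))
  have he_eq : e = p := ContinuousLinearMap.IsIdempotentElem.ext he hp ⟨hrange, hker⟩
  exact (sub_eq_zero.1 (add_eq_left.1 he_eq)).symm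

theorem isIdempotentElem_of_mul_eq_of_mul_eq {M : Type*} [Semigroup M] {e p : M} (hpe : p * e = p)
    (hep : e * p = e) : IsIdempotentElem e := by
  calc e * e = e * (p * e) := by rw [← mul_assoc, hep]
    _ = e := by rw [hpe, hep]

theorem eq_of_isProj_range {e f : E →L[𝕜] E} (hpe : p * e = p) (hep : e * p = e)
    (hf : LinearMap.IsProj e.range f) (hpf : p * f * p = p * f) : f = e := by
  have he := ContinuousLinearMap.IsIdempotentElem.toLinearMap
    (isIdempotentElem_of_mul_eq_of_mul_eq hpe hep)
  have hfe : f * e = e := ContinuousLinearMap.ext fun x ↦ hf.map_id _ ⟨x, rfl⟩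
  have hef : e * f = f := ContinuousLinearMap.ext fun x ↦
    (LinearMap.IsIdempotentElem.mem_range_iff he).1 (hf.map_mem x)
  have hfp : f * p = f := by
    calc f * p = e * (p * f * p) := by rw [← mul_assoc, ← mul_assoc, hep, hef]
      _ = f := by rw [hpf, ← mul_assoc, hep, hef]
  calc f = f * (p * e) := by rw [hpe, hfp]
    _ = e := by rw [← mul_assoc, hfp, hfe]

theorem eq_zero_of_norm_add_pow_smul_le {c : 𝕜} (hc : 1 < ‖c‖) {x y : E} {C : ℝ}
    (hC : ∀ n : ℕ, ‖x + c ^ n • y‖ ≤ C) : y = 0 := by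
  by_contra hy
  have hgrowth : Filter.Tendsto (fun n : ℕ ↦ ‖c‖ ^ n * ‖y‖) .atTop .atTop :=
    (tendsto_pow_atTop_atTop_of_one_lt hc).atTop_mul_const (norm_pos_iff.2 hy)
  obtain ⟨n, hn⟩ := (hgrowth.eventually_gt_atTop (C + ‖x‖)).exists
  refine hn.not_ge ?_
  calc ‖c‖ ^ n * ‖y‖ = ‖x + c ^ n • y - x‖ := by rw [add_sub_cancel_left, norm_smul, norm_pow]
    _ ≤ ‖x + c ^ n • y‖ + ‖x‖ := norm_sub_le _ _
    _ ≤ C + ‖x‖ := by gcongr; exact hC n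

variable [CompleteSpace E] {q : ℝ≥0∞} [Fact (1 ≤ q)]

theorem HasReductionProperty.intertwining_symm (hA : HasReductionProperty (lpDiag ℕ q '' A))
    (hp : IsIdempotentElem p) (hpA : p ∈ Subalgebra.centralizer 𝕜 A)
    (hno : ∀ S ∈ Subalgebra.centralizer 𝕜 A, p * S * p = p * S)
    (hT : T ∈ Subalgebra.centralizer 𝕜 A) : p * T * p = T * p := by
  obtain ⟨c, hc⟩ := NormedField.exists_one_lt_norm 𝕜
  set s := T * p - p * T * p with hs_def
  have hsA : s ∈ Subalgebra.centralizer 𝕜 A :=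
    sub_mem (mul_mem hT hpA) (mul_mem (mul_mem hpA hT) hpA)
  have hps : p * s = 0 := by
    simp only [hs_def, mul_sub, ← mul_assoc, hp.eq, sub_self]
  have hsp : s * p = s := by
    simp only [hs_def, sub_mul, hp.mul_mul_self]
  -- `p + cⁿ s` is the projection along `ker p` onto the graph of `cⁿ s`.
  let e : ℕ → E →L[𝕜] E := fun n ↦ p + c ^ n • s
  have hpe (n : ℕ) : p * e n = p := by
    rw [mul_add, mul_smul_comm, hps, smul_zero, add_zero, hp.eq]
  have hep (n : ℕ) : e n * p = e n := by
    rw [add_mul, smul_mul_assoc, hsp, hp.eq]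
  have he (n : ℕ) : IsIdempotentElem (e n) :=
    isIdempotentElem_of_mul_eq_of_mul_eq (hpe n) (hep n)
  have heA (n : ℕ) : e n ∈ Subalgebra.centralizer 𝕜 A :=
    add_mem hpA (Subalgebra.smul_mem _ hsA _)
  obtain ⟨C, P, hP⟩ := hA.exists_bounded_isProj fun n ↦ .range (he n) (heA n)
  have hbounded (n : ℕ) : ‖e n‖ ≤ C := by
    obtain ⟨hPA, hproj, hC⟩ := hP n
    rwa [eq_of_isProj_range (hpe n) (hep n) hproj (hno _ hPA)] at hC
  exact (sub_eq_zero.1 (eq_zero_of_norm_add_pow_smul_le hc hbounded)).symm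

theorem HasReductionProperty.mem_centralizer_centralizer_of_unique_complement
    (hA : HasReductionProperty (lpDiag ℕ q '' A)) (hp : IsIdempotentElem p)
    (hpA : p ∈ Subalgebra.centralizer 𝕜 A)
    (huniq : ∀ W, IsClosedInvariant A W → IsCompl p.range W → W = p.ker) :
    p ∈ Subalgebra.centralizer 𝕜 (Subalgebra.centralizer 𝕜 A : Set (E →L[𝕜] E)) := fun T hT ↦ by
  have hno (S) (hS : S ∈ Subalgebra.centralizer 𝕜 A) : p * S * p = p * S :=
    mul_mul_eq_mul_of_unique_complement hp hpA huniq hS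
  rw [← hA.intertwining_symm hp hpA hno hT, hno T hT]

end Intertwining

theorem unique_complement_projection_central_general
    {𝕜 E : Type*} [NontriviallyNormedField 𝕜] [NormedAddCommGroup E] [NormedSpace 𝕜 E]
    [CompleteSpace E] {q : ℝ≥0∞} [Fact (1 ≤ q)] {A : Set (E →L[𝕜] E)}
    (hA : HasReductionProperty (lpDiag ℕ q '' A)) {V W : Submodule 𝕜 E}
    (hV : IsClosedInvariant A V) (hW : IsClosedInvariant A W) (hVW : IsCompl V W)
    (huniq : ∀ W', IsClosedInvariant A W' → IsCompl V W' → W' = W)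
    {p : E →L[𝕜] E} (hfix : ∀ x ∈ V, p x = x) (hker : ∀ x ∈ W, p x = 0) :
    (∀ T : E →L[𝕜] E, (∀ a ∈ A, Commute T a) → Commute p T) ∧
    (∀ S : E →L[𝕜] E,
      (∀ T : E →L[𝕜] E, (∀ a ∈ A, Commute T a) → Commute S T) → Commute p S) := by
  have hVW := Submodule.IsCompl.isTopCompl_of_isClosed hVW hV.isClosed hW.isClosed
  obtain rfl := eq_projectionL hVW hfix hker
  have hpA := projectionL_mem_centralizer hVW hV.mapsTo hW.mapsTo
  have hpA'' := hA.mem_centralizer_centralizer_of_unique_complement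
    (Submodule.isIdempotentElem_projectionL hVW) hpA
    (by simpa only [Submodule.range_projectionL, Submodule.ker_projectionL] using huniq)
  exact ⟨fun T hT ↦ (hpA'' T fun a ha ↦ (hT a ha).eq.symm).symm,
    fun S hS ↦ (hS _ fun a ha ↦ (hpA a ha).symm).symm⟩

/-- for an operator algebra `A ⊆ B(H)` with the complete reduction property,
if the closed submodule `V` is uniquely complemented (among closed submodules) by `W`, then
the projection onto `V` along `W` is central in `A''`: it commutes with every element of
the commutant `A′` and of the bicommutant `A''`. -/
theorem unique_complement_projection_central
    {H : Type*} [NormedAddCommGroup H] [InnerProductSpace ℂ H] [CompleteSpace H]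
    (A : Subalgebra ℂ (H →L[ℂ] H))
    (hcrp : ∀ V : Submodule ℂ (lp (fun _ : ℕ => H) 2), IsClosed (V : Set (lp (fun _ : ℕ => H) 2)) →
      (∀ a ∈ A, ∀ ξ ∈ V, ∀ η : lp (fun _ : ℕ => H) 2, (∀ i, η i = a (ξ i)) → η ∈ V) →
      ∃ W : Submodule ℂ (lp (fun _ : ℕ => H) 2), IsClosed (W : Set (lp (fun _ : ℕ => H) 2)) ∧
        (∀ a ∈ A, ∀ ξ ∈ W, ∀ η : lp (fun _ : ℕ => H) 2, (∀ i, η i = a (ξ i)) → η ∈ W) ∧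
        V ⊓ W = ⊥ ∧ V ⊔ W = ⊤)
    (V W : Submodule ℂ H)
    (hVc : IsClosed (V : Set H)) (hWc : IsClosed (W : Set H))
    (hVinv : ∀ a ∈ A, ∀ x ∈ V, a x ∈ V) (hWinv : ∀ a ∈ A, ∀ x ∈ W, a x ∈ W)
    (hmeet : V ⊓ W = ⊥) (hjoin : V ⊔ W = ⊤)
    (huniq : ∀ W' : Submodule ℂ H, IsClosed (W' : Set H) → (∀ a ∈ A, ∀ x ∈ W', a x ∈ W') →
      V ⊓ W' = ⊥ → V ⊔ W' = ⊤ → W' = W)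
    (p : H →L[ℂ] H) (hp : IsIdempotentElem p)
    (hfix : ∀ x ∈ V, p x = x) (hker : ∀ x ∈ W, p x = 0) :
    (∀ T : H →L[ℂ] H, (∀ a ∈ A, Commute T a) → Commute p T) ∧
    (∀ S : H →L[ℂ] H,
      (∀ T : H →L[ℂ] H, (∀ a ∈ A, Commute T a) → Commute S T) → Commute p S) :=
  unique_complement_projection_central_general (hasReductionProperty_lpDiag_iff.2 hcrp)
    ⟨hVc, hVinv⟩ ⟨hWc, hWinv⟩ ⟨disjoint_iff.2 hmeet, codisjoint_iff.2 hjoin⟩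
    (fun W' hW' h ↦ huniq W' hW'.isClosed hW'.mapsTo h.inf_eq_bot h.sup_eq_top) hfix hker
end
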